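/- arXiv:1406.1977 — 6 statements merged into one kernel-verified Lean document; each statement's English description precedes it below -/
import Mathlib

section
/- Let m ≥ 2 be an integer, K = ℝ or ℂ, and let p be a real number with p ≥ 2m. Suppose C > 0 is such that for every n ≥ 1 and every m-linear form T : ℓ_p^n × ⋯ × ℓ_p^n → K one has (∑_{i_1,…,i_m=1}^{n} |T(e_{i_1},…,e_{i_m})|^{2mp/(mp+p−2m)})^{(mp+p−2m)/(2mp)} ≤ C·‖T‖, where ‖T‖ is the supremum of |T| over the product of unit balls. Then for every n ≥ 1 and every m-homogeneous polynomial P(x) = ∑_{|α|=m} a_α x^α on ℓ_p^n one has (∑_{|α|=m} |a_α|^{2mp/(mp+p−2m)})^{(mp+p−2m)/(2mp)} ≤ C · (m^m / (m!)^{(mp+p−2m)/(2mp)}) · ‖P‖. -/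
open Finset Nat

/-- The `ℓ_p` norm on `𝕜^n` for a real exponent `p`. -/
noncomputable def lpNorm {𝕜 : Type*} [RCLike 𝕜] {n : ℕ} (p : ℝ) (x : Fin n → 𝕜) : ℝ :=
  (∑ i, ‖x i‖ ^ p) ^ (1 / p)

/-- The sup norm of the `m`-homogeneous polynomial with coefficients `a`
over the unit ball of `ℓ_p^n`. -/
noncomputable def polyNorm {𝕜 : Type*} [RCLike 𝕜] (p : ℝ) (m n : ℕ) (a : (Fin n → ℕ) → 𝕜) : ℝ :=
  sSup {y : ℝ | ∃ x : Fin n → 𝕜, lpNorm p x ≤ 1 ∧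
    y = ‖∑ α ∈ Finset.Nat.antidiagonalTuple n m, a α * ∏ i, x i ^ α i‖}

/-- The sup norm of an `m`-linear form over the product of unit balls of `ℓ_p^n`. -/
noncomputable def multNorm {𝕜 : Type*} [RCLike 𝕜] (p : ℝ) (m n : ℕ)
    (T : MultilinearMap 𝕜 (fun _ : Fin m => (Fin n → 𝕜)) 𝕜) : ℝ :=
  sSup {y : ℝ | ∃ x : Fin m → (Fin n → 𝕜), (∀ j, lpNorm p (x j) ≤ 1) ∧ y = ‖T x‖}

/-- The multi-index counting how often each value is taken. -/
def cntIdx {m n : ℕ} (f : Fin m → Fin n) : Fin n → ℕ := fun i => #{j | f j = i}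

lemma cntIdx_mem {m n : ℕ} (f : Fin m → Fin n) :
    cntIdx f ∈ Finset.Nat.antidiagonalTuple n m := by
  rw [Finset.Nat.mem_antidiagonalTuple]
  have := Finset.card_eq_sum_card_fiberwise (s := (univ : Finset (Fin m)))
    (t := (univ : Finset (Fin n))) (f := f) (by intro x _; simp)
  simpa [cntIdx] using this.symm

lemma cntIdx_exists_perm {m n : ℕ} (f g : Fin m → Fin n) (h : cntIdx f = cntIdx g) :
    ∃ σ : Equiv.Perm (Fin m), g = f ∘ σ := by
  have e : ∀ c, Nonempty ({a // g a = c} ≃ {b // f b = c}) := by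
    intro c
    refine ⟨Fintype.equivOfCardEq ?_⟩
    have := congrFun h c
    simp only [cntIdx] at this
    rw [Fintype.card_subtype, Fintype.card_subtype, this]
  refine ⟨Equiv.ofFiberEquiv (fun c => (e c).some), ?_⟩
  funext a
  exact (Equiv.ofFiberEquiv_map _ a).symm

lemma cntIdx_comp {m n : ℕ} (f : Fin m → Fin n) (σ : Equiv.Perm (Fin m)) :
    cntIdx (f ∘ σ) = cntIdx f := by
  funext i
  simp only [cntIdx]
  exact Finset.card_bij (fun j _ => σ j) (by simp) (by simp)
    (fun b hb => ⟨σ.symm b, by simpa using hb, by simp⟩)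

/-- Number of functions with a given multi-index. -/
def fibNum (m n : ℕ) (α : Fin n → ℕ) : ℕ := #{f : Fin m → Fin n | cntIdx f = α}

lemma fibNum_pos {m n : ℕ} (α : Fin n → ℕ) (h : α ∈ Finset.Nat.antidiagonalTuple n m) :
    0 < fibNum m n α := by
  rw [Finset.Nat.mem_antidiagonalTuple] at h
  subst h
  rw [fibNum, Finset.card_pos]
  refine ⟨fun j => (finSigmaFinEquiv.symm j).1, ?_⟩
  simp only [mem_filter, mem_univ, true_and]
  funext i
  have : Fintype.card {j : Fin (∑ i, α i) // (finSigmaFinEquiv.symm j).1 = i} =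
      Fintype.card (Fin (α i)) := by
    rw [Fintype.card_congr
      (Equiv.subtypeEquiv (q := fun s : (i : Fin n) × Fin (α i) => s.1 = i)
        finSigmaFinEquiv.symm (by simp))]
    exact Fintype.card_congr (Equiv.sigmaSubtype i)
  rw [Fintype.card_subtype] at this
  simpa [cntIdx] using this

lemma fibNum_le {m n : ℕ} (α : Fin n → ℕ) : fibNum m n α ≤ m ! := by
  by_cases hne : (univ.filter (fun f : Fin m → Fin n => cntIdx f = α)).Nonempty
  · obtain ⟨f, hf⟩ := hne
    simp only [mem_filter, mem_univ, true_and] at hf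
    have : univ.filter (fun f : Fin m → Fin n => cntIdx f = α) ⊆
        (univ : Finset (Equiv.Perm (Fin m))).image (fun σ : Equiv.Perm (Fin m) => f ∘ σ) := by
      intro g hg
      simp only [mem_filter, mem_univ, true_and] at hg
      obtain ⟨σ, rfl⟩ := cntIdx_exists_perm f g (hf.trans hg.symm)
      simp
    refine (card_le_card this).trans (card_image_le.trans ?_)
    simp [Fintype.card_perm]
  · rw [not_nonempty_iff_eq_empty] at hne
    simp [fibNum, hne]

section
variable {𝕜 : Type*} [RCLike 𝕜]

/-- The symmetric multilinear form of a polynomial. -/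
noncomputable def symForm (m n : ℕ) (a : (Fin n → ℕ) → 𝕜) :
    MultilinearMap 𝕜 (fun _ : Fin m => (Fin n → 𝕜)) 𝕜 :=
  ∑ f : Fin m → Fin n, (a (cntIdx f) / (fibNum m n (cntIdx f) : 𝕜)) •
    (MultilinearMap.mkPiAlgebra 𝕜 (Fin m) 𝕜).compLinearMap
      (fun j => LinearMap.proj (f j))

lemma symForm_apply (m n : ℕ) (a : (Fin n → ℕ) → 𝕜) (x : Fin m → Fin n → 𝕜) :
    symForm m n a x = ∑ f : Fin m → Fin n,
      (a (cntIdx f) / (fibNum m n (cntIdx f) : 𝕜)) * ∏ j, x j (f j) := by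
  simp [symForm]

lemma symForm_single (m n : ℕ) (a : (Fin n → ℕ) → 𝕜) (f : Fin m → Fin n) :
    symForm m n a (fun j => Pi.single (f j) 1) =
      a (cntIdx f) / (fibNum m n (cntIdx f) : 𝕜) := by
  rw [symForm_apply, Finset.sum_eq_single f]
  · simp
  · intro g _ hg
    obtain ⟨j, hj⟩ := Function.ne_iff.mp hg
    rw [Finset.prod_eq_zero (mem_univ j), mul_zero]
    rw [Pi.single_eq_of_ne hj]
  · simp

lemma symForm_symm (m n : ℕ) (a : (Fin n → ℕ) → 𝕜) (x : Fin m → Fin n → 𝕜)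
    (σ : Equiv.Perm (Fin m)) :
    symForm m n a (fun j => x (σ j)) = symForm m n a x := by
  rw [symForm_apply, symForm_apply]
  refine Fintype.sum_equiv (Equiv.arrowCongr σ (Equiv.refl _)) _ _ ?_
  intro f
  have h1 : (Equiv.arrowCongr σ (Equiv.refl _)) f = f ∘ σ.symm := by
    funext j; simp [Equiv.arrowCongr]
  rw [h1, cntIdx_comp]
  congr 1
  exact Fintype.prod_equiv σ _ _ (by simp)

lemma symForm_diag (m n : ℕ) (a : (Fin n → ℕ) → 𝕜) (x : Fin n → 𝕜) :
    symForm m n a (fun _ => x) =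
      ∑ α ∈ Finset.Nat.antidiagonalTuple n m, a α * ∏ i, x i ^ α i := by
  rw [symForm_apply, ← Finset.sum_fiberwise_of_maps_to (g := cntIdx)
    (t := Finset.Nat.antidiagonalTuple n m) (fun f _ => cntIdx_mem f)]
  refine Finset.sum_congr rfl fun α hα => ?_
  have h0 : (fibNum m n α : 𝕜) ≠ 0 := by exact_mod_cast (fibNum_pos α hα).ne'
  have : ∀ f ∈ univ.filter (fun f : Fin m → Fin n => cntIdx f = α),
      (a (cntIdx f) / (fibNum m n (cntIdx f) : 𝕜)) * ∏ j, x (f j) =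
      (a α / fibNum m n α) * ∏ i, x i ^ α i := by
    intro f hf
    simp only [mem_filter, mem_univ, true_and] at hf
    rw [hf]
    congr 1
    rw [← Finset.prod_fiberwise_of_maps_to (g := f) (t := univ) (by simp)]
    refine Finset.prod_congr rfl fun i _ => ?_
    rw [← hf, Finset.prod_congr rfl (g := fun _ => x i)]
    · simp [cntIdx]
    · intro j hj
      simp only [mem_filter, mem_univ, true_and] at hj
      rw [hj]
  rw [Finset.sum_congr rfl this, Finset.sum_const, nsmul_eq_mul]
  change (fibNum m n α : 𝕜) * _ = _
  field_simp

lemma hl_sign_sum (m : ℕ) (g : Fin m → Fin m) :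
    ∑ ε : Fin m → ℤˣ, (∏ k, ((ε k : ℤ) : 𝕜)) * ∏ j, ((ε (g j) : ℤ) : 𝕜) =
      if Function.Bijective g then (2 : 𝕜) ^ m else 0 := by
  split_ifs with hg
  · have : ∀ ε : Fin m → ℤˣ, (∏ k, ((ε k : ℤ) : 𝕜)) * ∏ j, ((ε (g j) : ℤ) : 𝕜) = 1 := by
      intro ε
      rw [Fintype.prod_bijective g hg (fun j => ((ε (g j) : ℤ) : 𝕜)) (fun k => ((ε k : ℤ) : 𝕜))
        (by simp), ← Finset.prod_mul_distrib]
      refine Finset.prod_eq_one fun k _ => ?_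
      rcases Int.units_eq_one_or (ε k) with h | h <;> simp [h]
    simp [this]
  · have hs : ¬ Function.Surjective g := fun h => hg (Finite.surjective_iff_bijective.mp h)
    simp only [Function.Surjective, not_forall, not_exists] at hs
    obtain ⟨k0, hk0⟩ := hs
    let flp : (Fin m → ℤˣ) ≃ (Fin m → ℤˣ) :=
      Equiv.mulRight (Function.update 1 k0 (-1))
    have key : ∀ ε : Fin m → ℤˣ,
        (∏ k, ((flp ε k : ℤ) : 𝕜)) * ∏ j, ((flp ε (g j) : ℤ) : 𝕜) =
        - ((∏ k, ((ε k : ℤ) : 𝕜)) * ∏ j, ((ε (g j) : ℤ) : 𝕜)) := by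
      intro ε
      have h1 : ∏ j, ((flp ε (g j) : ℤ) : 𝕜) = ∏ j, ((ε (g j) : ℤ) : 𝕜) := by
        refine Finset.prod_congr rfl fun j _ => ?_
        simp [flp, Function.update_of_ne (hk0 j)]
      have h2 : ∏ k, ((flp ε k : ℤ) : 𝕜) = - ∏ k, ((ε k : ℤ) : 𝕜) := by
        simp only [flp, Equiv.coe_mulRight, Pi.mul_apply, Units.val_mul, Int.cast_mul,
          Finset.prod_mul_distrib]
        rw [Finset.prod_eq_single (f := fun k =>
          (((Function.update (1 : Fin m → ℤˣ) k0 (-1) k : ℤˣ) : ℤ) : 𝕜)) k0]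
        · simp
        · intro b _ hb
          simp [Function.update_of_ne hb]
        · simp
      rw [h1, h2, neg_mul]
    have := Equiv.sum_comp flp
      (fun ε : Fin m → ℤˣ => (∏ k, ((ε k : ℤ) : 𝕜)) * ∏ j, ((ε (g j) : ℤ) : 𝕜))
    simp only [key, Finset.sum_neg_distrib] at this
    exact self_eq_neg.mp this.symm

lemma polarization (m n : ℕ) (a : (Fin n → ℕ) → 𝕜) (x : Fin m → Fin n → 𝕜) :
    ∑ ε : Fin m → ℤˣ, (∏ k, ((ε k : ℤ) : 𝕜)) *
      symForm m n a (fun _ => ∑ k, ((ε k : ℤ) : 𝕜) • x k) =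
    (2 : 𝕜) ^ m * (m ! : 𝕜) * symForm m n a x := by
  have h1 : ∀ ε : Fin m → ℤˣ, (∏ k, ((ε k : ℤ) : 𝕜)) *
      symForm m n a (fun _ => ∑ k, ((ε k : ℤ) : 𝕜) • x k) =
      ∑ g : Fin m → Fin m, ((∏ k, ((ε k : ℤ) : 𝕜)) * ∏ j, ((ε (g j) : ℤ) : 𝕜)) *
        symForm m n a (fun j => x (g j)) := by
    intro ε
    rw [MultilinearMap.map_sum (symForm m n a) (fun (_ : Fin m) (k : Fin m) =>
      ((ε k : ℤ) : 𝕜) • x k), Finset.mul_sum]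
    refine Finset.sum_congr rfl fun g _ => ?_
    rw [MultilinearMap.map_smul_univ (symForm m n a) (fun j => ((ε (g j) : ℤ) : 𝕜))
      (fun j => x (g j)), smul_eq_mul, mul_assoc]
  simp only [h1]
  rw [Finset.sum_comm]
  simp only [← Finset.sum_mul, hl_sign_sum]
  have h2 : ∀ g : Fin m → Fin m, (if Function.Bijective g then (2 : 𝕜) ^ m else 0) *
      symForm m n a (fun j => x (g j)) =
      if Function.Bijective g then (2 : 𝕜) ^ m * symForm m n a x else 0 := by
    intro g
    split_ifs with hg
    · rw [← symForm_symm m n a x (Equiv.ofBijective g hg)]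
      rfl
    · simp
  simp only [h2]
  rw [← Finset.sum_filter, Finset.sum_const, nsmul_eq_mul]
  have h3 : #{g : Fin m → Fin m | Function.Bijective g} = m ! := by
    have : Fintype.card (Equiv.Perm (Fin m)) = m ! := by simp [Fintype.card_perm]
    rw [← this, ← Finset.card_univ]
    symm
    exact Finset.card_bij (fun (σ : Equiv.Perm (Fin m)) _ => (σ : Fin m → Fin m))
      (fun σ _ => mem_filter.mpr ⟨mem_univ _, σ.bijective⟩)
      (fun σ _ τ _ h => DFunLike.coe_injective h)
      (fun g hg => ⟨Equiv.ofBijective g ((mem_filter.mp hg).2), mem_univ _, rfl⟩)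
  rw [h3]
  ring

lemma hl_rpow_le_one_iff {x z : ℝ} (hx : 0 ≤ x) (hz : 0 < z) : x ^ z ≤ 1 ↔ x ≤ 1 := by
  have := Real.rpow_le_rpow_iff hx zero_le_one hz
  rwa [Real.one_rpow] at this

lemma lpNorm_le_one_iff {n : ℕ} {p : ℝ} (hp : 0 < p) (x : Fin n → 𝕜) :
    lpNorm p x ≤ 1 ↔ ∑ i, ‖x i‖ ^ p ≤ 1 := by
  have h0 : 0 ≤ ∑ i, ‖x i‖ ^ p := Finset.sum_nonneg fun i _ => by positivity
  unfold lpNorm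
  rw [hl_rpow_le_one_iff h0 (by positivity)]

lemma polyNorm_bdd {p : ℝ} (hp : 0 < p) (m n : ℕ) (a : (Fin n → ℕ) → 𝕜) :
    BddAbove {y : ℝ | ∃ x : Fin n → 𝕜, lpNorm p x ≤ 1 ∧
      y = ‖∑ α ∈ Finset.Nat.antidiagonalTuple n m, a α * ∏ i, x i ^ α i‖} := by
  refine ⟨∑ α ∈ Finset.Nat.antidiagonalTuple n m, ‖a α‖, ?_⟩
  rintro y ⟨x, hx, rfl⟩
  rw [lpNorm_le_one_iff hp] at hx
  have hx1 : ∀ i, ‖x i‖ ≤ 1 := by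
    intro i
    have h1 : ‖x i‖ ^ p ≤ 1 :=
      (Finset.single_le_sum (f := fun i => ‖x i‖ ^ p) (fun i _ => by positivity)
        (mem_univ i)).trans hx
    exact (hl_rpow_le_one_iff (norm_nonneg _) hp).mp h1
  refine (norm_sum_le _ _).trans (Finset.sum_le_sum fun α _ => ?_)
  rw [norm_mul, norm_prod]
  refine mul_le_of_le_one_right (norm_nonneg _) (Finset.prod_le_one (fun i _ => norm_nonneg _) ?_)
  intro i _
  rw [norm_pow]
  exact pow_le_one₀ (norm_nonneg _) (hx1 i)

lemma lp_avg {p : ℝ} (hp : 1 ≤ p) (m n : ℕ) (hm : 0 < m) (x : Fin m → Fin n → 𝕜)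
    (hx : ∀ j, lpNorm p (x j) ≤ 1) (ε : Fin m → ℤˣ) :
    lpNorm p ((m : 𝕜)⁻¹ • ∑ k, ((ε k : ℤ) : 𝕜) • x k) ≤ 1 := by
  have hp0 : 0 < p := by linarith
  have hm0 : (0 : ℝ) < m := by exact_mod_cast hm
  simp only [lpNorm_le_one_iff hp0] at hx ⊢
  have hε : ∀ k, ‖((ε k : ℤ) : 𝕜)‖ = 1 := by
    intro k
    rcases Int.units_eq_one_or (ε k) with h | h <;> simp [h]
  have h1 : ∀ i, ‖((m : 𝕜)⁻¹ • ∑ k, ((ε k : ℤ) : 𝕜) • x k) i‖ ^ p ≤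
      ∑ k, (m : ℝ)⁻¹ * ‖x k i‖ ^ p := by
    intro i
    have h2 : ‖((m : 𝕜)⁻¹ • ∑ k, ((ε k : ℤ) : 𝕜) • x k) i‖ ≤ ∑ k, (m : ℝ)⁻¹ * ‖x k i‖ := by
      rw [Pi.smul_apply, norm_smul, norm_inv, RCLike.norm_natCast, Finset.sum_apply,
        ← Finset.mul_sum]
      refine mul_le_mul_of_nonneg_left ((norm_sum_le _ _).trans (le_of_eq ?_)) (by positivity)
      refine Finset.sum_congr rfl fun k _ => ?_
      rw [Pi.smul_apply, norm_smul, hε, one_mul]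
    refine (Real.rpow_le_rpow (norm_nonneg _) h2 hp0.le).trans ?_
    refine Real.rpow_arith_mean_le_arith_mean_rpow univ (fun _ => (m : ℝ)⁻¹) (fun k => ‖x k i‖)
      (fun _ _ => by positivity) ?_ (fun _ _ => norm_nonneg _) hp
    simp [hm0.ne']
  refine (Finset.sum_le_sum fun i _ => h1 i).trans ?_
  rw [Finset.sum_comm]
  simp only [← Finset.mul_sum]
  calc (m : ℝ)⁻¹ * ∑ k, ∑ i, ‖x k i‖ ^ p ≤ (m : ℝ)⁻¹ * ∑ k : Fin m, 1 :=
        mul_le_mul_of_nonneg_left (Finset.sum_le_sum fun k _ => hx k) (by positivity)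
    _ = 1 := by simp [hm0.ne']

lemma polyNorm_nonneg (p : ℝ) (m n : ℕ) (a : (Fin n → ℕ) → 𝕜) : 0 ≤ polyNorm p m n a := by
  refine Real.sSup_nonneg ?_
  rintro y ⟨x, _, rfl⟩
  exact norm_nonneg _

lemma multNorm_symForm_le {p : ℝ} (hp : 1 ≤ p) (m n : ℕ) (hm : 0 < m) (a : (Fin n → ℕ) → 𝕜) :
    multNorm p m n (symForm m n a) ≤ (m : ℝ) ^ m / (m ! : ℝ) * polyNorm p m n a := by
  have hP := polyNorm_nonneg p m n a
  have hp0 : 0 < p := by linarith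
  refine Real.sSup_le ?_ (by positivity)
  rintro y ⟨x, hx, rfl⟩
  have hm0 : (m : 𝕜) ≠ 0 := by exact_mod_cast hm.ne'
  have h1 : ∀ ε : Fin m → ℤˣ, ‖(∏ k, ((ε k : ℤ) : 𝕜)) *
      symForm m n a (fun _ => ∑ k, ((ε k : ℤ) : 𝕜) • x k)‖ ≤ (m : ℝ) ^ m * polyNorm p m n a := by
    intro ε
    have hε : ‖∏ k, ((ε k : ℤ) : 𝕜)‖ = 1 := by
      rw [norm_prod]
      refine Finset.prod_eq_one fun k _ => ?_
      rcases Int.units_eq_one_or (ε k) with h | h <;> simp [h]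
    have h2 : (fun _ : Fin m => ∑ k, ((ε k : ℤ) : 𝕜) • x k) =
        fun _ : Fin m => (m : 𝕜) • ((m : 𝕜)⁻¹ • ∑ k, ((ε k : ℤ) : 𝕜) • x k) := by
      funext _
      rw [smul_inv_smul₀ hm0]
    rw [norm_mul, hε, one_mul, h2, MultilinearMap.map_smul_univ (symForm m n a)
      (fun _ => (m : 𝕜)) (fun _ => (m : 𝕜)⁻¹ • ∑ k, ((ε k : ℤ) : 𝕜) • x k), norm_smul]
    have h3 : ‖∏ _i : Fin m, (m : 𝕜)‖ = (m : ℝ) ^ m := by simp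
    rw [h3, symForm_diag]
    refine mul_le_mul_of_nonneg_left ?_ (by positivity)
    exact le_csSup (polyNorm_bdd hp0 m n a) ⟨_, lp_avg hp m n hm x hx ε, rfl⟩
  have h4 := congrArg norm (polarization m n a x)
  have h5 := (norm_sum_le univ (fun ε : Fin m → ℤˣ => (∏ k, ((ε k : ℤ) : 𝕜)) *
      symForm m n a (fun _ => ∑ k, ((ε k : ℤ) : 𝕜) • x k))).trans
      (Finset.sum_le_sum fun ε _ => h1 ε)
  rw [h4] at h5
  simp only [norm_mul, norm_pow, RCLike.norm_natCast, RCLike.norm_ofNat, Finset.sum_const,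
    nsmul_eq_mul, Finset.card_univ, Fintype.card_pi, Fintype.card_units_int, Finset.prod_const,
    Fintype.card_fin, Nat.cast_pow, Nat.cast_ofNat] at h5
  have hf : (0 : ℝ) < (m ! : ℝ) := by exact_mod_cast Nat.factorial_pos m
  rw [div_mul_eq_mul_div, le_div_iff₀ hf]
  have h2m : (0 : ℝ) < 2 ^ m := by positivity
  refine le_of_mul_le_mul_left ?_ h2m
  linarith

lemma coeff_sum_le (m n : ℕ) (a : (Fin n → ℕ) → 𝕜) {r : ℝ} (hr : 1 ≤ r) :
    ∑ α ∈ Finset.Nat.antidiagonalTuple n m, ‖a α‖ ^ r ≤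
      (m ! : ℝ) ^ (r - 1) *
        ∑ f : Fin m → Fin n, ‖symForm m n a (fun j => Pi.single (f j) 1)‖ ^ r := by
  simp only [symForm_single]
  rw [← Finset.sum_fiberwise_of_maps_to (g := cntIdx)
    (t := Finset.Nat.antidiagonalTuple n m) (fun f _ => cntIdx_mem f), Finset.mul_sum]
  refine Finset.sum_le_sum fun α hα => ?_
  have hN : (0 : ℝ) < (fibNum m n α : ℝ) := by exact_mod_cast fibNum_pos α hα
  have hle : (fibNum m n α : ℝ) ≤ (m ! : ℝ) := by exact_mod_cast fibNum_le α
  have : ∀ f ∈ univ.filter (fun f : Fin m → Fin n => cntIdx f = α),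
      ‖a (cntIdx f) / (fibNum m n (cntIdx f) : 𝕜)‖ ^ r = ‖a α‖ ^ r / (fibNum m n α : ℝ) ^ r := by
    intro f hf
    simp only [mem_filter, mem_univ, true_and] at hf
    rw [hf, norm_div, RCLike.norm_natCast, Real.div_rpow (norm_nonneg _) hN.le]
  rw [Finset.sum_congr rfl this, Finset.sum_const, nsmul_eq_mul]
  change _ ≤ _ * ((fibNum m n α : ℝ) * _)
  have h1 : (fibNum m n α : ℝ) ^ (r - 1) ≤ (m ! : ℝ) ^ (r - 1) :=
    Real.rpow_le_rpow hN.le hle (by linarith)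
  have h2 : (fibNum m n α : ℝ) ^ r = (fibNum m n α : ℝ) ^ (r - 1) * fibNum m n α := by
    rw [Real.rpow_sub_one hN.ne', div_mul_cancel₀ _ hN.ne']
  have h3 : 0 < (fibNum m n α : ℝ) ^ (r - 1) := Real.rpow_pos_of_pos hN _
  rw [h2]
  calc ‖a α‖ ^ r = (fibNum m n α : ℝ) ^ (r - 1) *
        (fibNum m n α * (‖a α‖ ^ r / ((fibNum m n α : ℝ) ^ (r - 1) * fibNum m n α))) := by
        field_simp
    _ ≤ _ := mul_le_mul_of_nonneg_right h1 (by positivity)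

end

/-- If `C` is a constant for the `m`-linear Hardy–Littlewood inequality on
`ℓ_p^n` (`p ≥ 2m`), then `C · m^m/(m!)^{(mp+p-2m)/(2mp)}` is a constant for the polynomial
Hardy–Littlewood inequality. -/
theorem polynomial_HL_from_multilinear {𝕜 : Type*} [RCLike 𝕜] (m : ℕ) (hm : 2 ≤ m)
    (p : ℝ) (hp : 2 * (m : ℝ) ≤ p) (C : ℝ) (hC : 0 < C)
    (hmult : ∀ n : ℕ, 1 ≤ n → ∀ T : MultilinearMap 𝕜 (fun _ : Fin m => (Fin n → 𝕜)) 𝕜,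
      (∑ f : Fin m → Fin n, ‖T (fun j => Pi.single (f j) 1)‖
          ^ (2 * (m : ℝ) * p / ((m : ℝ) * p + p - 2 * m)))
        ^ (((m : ℝ) * p + p - 2 * m) / (2 * (m : ℝ) * p)) ≤ C * multNorm p m n T) :
    ∀ n : ℕ, 1 ≤ n → ∀ a : (Fin n → ℕ) → 𝕜,
      (∑ α ∈ Finset.Nat.antidiagonalTuple n m, ‖a α‖
          ^ (2 * (m : ℝ) * p / ((m : ℝ) * p + p - 2 * m)))
        ^ (((m : ℝ) * p + p - 2 * m) / (2 * (m : ℝ) * p)) ≤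
      C * ((m : ℝ) ^ m / (m ! : ℝ) ^ (((m : ℝ) * p + p - 2 * m) / (2 * (m : ℝ) * p))) *
        polyNorm p m n a := by
  intro n hn a
  have hm2 : (2 : ℝ) ≤ m := by exact_mod_cast hm
  have hD : 0 < (m : ℝ) * p + p - 2 * m := by nlinarith
  have hE : 0 < 2 * (m : ℝ) * p := by nlinarith
  have hr : 1 ≤ 2 * (m : ℝ) * p / ((m : ℝ) * p + p - 2 * m) := by
    rw [one_le_div hD]; nlinarith
  have hinv : ((m : ℝ) * p + p - 2 * m) / (2 * (m : ℝ) * p) =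
      (2 * (m : ℝ) * p / ((m : ℝ) * p + p - 2 * m))⁻¹ := by rw [inv_div]
  have hT := hmult n hn (symForm m n a)
  have hN := multNorm_symForm_le (p := p) (by linarith) m n (by omega) a
  rw [hinv] at hT ⊢
  generalize 2 * (m : ℝ) * p / ((m : ℝ) * p + p - 2 * m) = r at *
  have hr0 : 0 < r := by linarith
  have hf : (0 : ℝ) < (m ! : ℝ) := by exact_mod_cast Nat.factorial_pos m
  have hS : 0 ≤ ∑ f : Fin m → Fin n, ‖symForm m n a (fun j => Pi.single (f j) 1)‖ ^ r :=
    Finset.sum_nonneg fun f _ => by positivity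
  have hexp : ((m ! : ℝ) ^ (r - 1)) ^ r⁻¹ = (m ! : ℝ) / (m ! : ℝ) ^ r⁻¹ := by
    rw [← Real.rpow_mul hf.le, sub_mul, mul_inv_cancel₀ hr0.ne', one_mul, Real.rpow_sub hf,
      Real.rpow_one]
  have hq : 0 < (m ! : ℝ) ^ r⁻¹ := Real.rpow_pos_of_pos hf _
  calc _ ≤ ((m ! : ℝ) ^ (r - 1) *
        ∑ f : Fin m → Fin n, ‖symForm m n a (fun j => Pi.single (f j) 1)‖ ^ r) ^ r⁻¹ :=
        Real.rpow_le_rpow (Finset.sum_nonneg fun α _ => by positivity)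
          (coeff_sum_le m n a hr) (by positivity)
    _ = (m ! : ℝ) / (m ! : ℝ) ^ r⁻¹ *
        (∑ f : Fin m → Fin n, ‖symForm m n a (fun j => Pi.single (f j) 1)‖ ^ r) ^ r⁻¹ := by
        rw [Real.mul_rpow (by positivity) hS, hexp]
    _ ≤ (m ! : ℝ) / (m ! : ℝ) ^ r⁻¹ * (C * ((m : ℝ) ^ m / (m ! : ℝ) * polyNorm p m n a)) :=
        mul_le_mul_of_nonneg_left (hT.trans (mul_le_mul_of_nonneg_left hN hC.le)) (by positivity)
    _ = _ := by field_simp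
end

section
/- Let m ≥ 2 be an integer, K = ℝ or ℂ, and let p be a real number with p ≥ 2m. Suppose C > 0 is such that for every n ≥ 1 and every m-linear form T on ℓ_p^n one has (∑_{i_1,…,i_m=1}^{n} |T(e_{i_1},…,e_{i_m})|^{2mp/(mp+p−2m)})^{(mp+p−2m)/(2mp)} ≤ C·‖T‖, and suppose M > 0 is such that for every n ≥ 1 and every m-homogeneous polynomial P on ℓ_p^n with polar L one has ‖L‖ ≤ M·‖P‖. Then for every n ≥ 1 and every m-homogeneous polynomial P(x) = ∑_{|α|=m} a_α x^α on ℓ_p^n one has (∑_{|α|=m} |a_α|^{2mp/(mp+p−2m)})^{(mp+p−2m)/(2mp)} ≤ (m!)^{(mp−p+2m)/(2mp)} · C · M · ‖P‖. -/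
open Finset Nat

lemma cntIdx_perm {m n : ℕ} (f : Fin m → Fin n) (σ : Equiv.Perm (Fin m)) :
    cntIdx (fun j => f (σ j)) = cntIdx f := by
  funext i
  unfold cntIdx
  apply Finset.card_equiv σ
  simp

lemma prod_cntIdx {R : Type*} [CommMonoid R] {m n : ℕ} (f : Fin m → Fin n) (x : Fin n → R) :
    ∏ j, x (f j) = ∏ i, x i ^ cntIdx f i := by
  unfold cntIdx
  rw [← Finset.prod_fiberwise_of_maps_to (s := univ) (t := univ) (g := f) (by simp)]
  refine Finset.prod_congr rfl fun i _ => ?_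
  rw [Finset.prod_congr rfl (g := fun _ => x i), Finset.prod_const]
  intro j hj
  simp only [Finset.mem_filter, Finset.mem_univ, true_and] at hj
  rw [hj]

lemma card_fiber {m n : ℕ} (α : Fin n → ℕ) (hα : α ∈ Finset.Nat.antidiagonalTuple n m) :
    #{f : Fin m → Fin n | cntIdx f = α} = Nat.multinomial univ α := by
  have h1 := Finset.sum_pow' (univ : Finset (Fin n))
    (fun i => (MvPolynomial.X i : MvPolynomial (Fin n) ℕ)) m
  rw [Finset.sum_pow_eq_sum_piAntidiag, Finset.piAntidiag_univ_fin_eq_antidiagonalTuple] at h1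
  have key : ∀ β : Fin n → ℕ, (∏ i, (MvPolynomial.X i : MvPolynomial (Fin n) ℕ) ^ β i)
      = MvPolynomial.monomial (Finsupp.equivFunOnFinite.symm β) 1 := by
    intro β
    rw [MvPolynomial.monomial_eq, Finsupp.prod_fintype _ _ (by simp)]
    simp
  have h2 := congrArg (MvPolynomial.coeff (Finsupp.equivFunOnFinite.symm α)) h1
  simp only [prod_cntIdx, key, MvPolynomial.coeff_sum, Fintype.piFinset_univ,
    MvPolynomial.coeff_monomial, EmbeddingLike.apply_eq_iff_eq, Finset.sum_boole] at h2
  rw [Finset.sum_eq_single α] at h2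
  · rw [← map_natCast (MvPolynomial.C (σ := Fin n) (R := ℕ)), MvPolynomial.coeff_C_mul] at h2
    simpa using h2.symm
  · intro β _ hb
    rw [← map_natCast (MvPolynomial.C (σ := Fin n) (R := ℕ)), MvPolynomial.coeff_C_mul]
    simp [MvPolynomial.coeff_monomial, hb]
  · exact fun h => absurd hα h

lemma sum_cntIdx {R : Type*} [CommSemiring R] {m n : ℕ} (G : (Fin n → ℕ) → R) :
    ∑ f : Fin m → Fin n, G (cntIdx f)
      = ∑ α ∈ Finset.Nat.antidiagonalTuple n m, (Nat.multinomial univ α : R) * G α := by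
  rw [← Finset.sum_fiberwise_of_maps_to (s := univ) (g := cntIdx) (fun f _ => cntIdx_mem f)]
  refine Finset.sum_congr rfl fun α hα => ?_
  rw [Finset.sum_congr rfl (g := fun _ => G α), Finset.sum_const, card_fiber α hα, nsmul_eq_mul]
  intro j hj
  simp only [Finset.mem_filter, Finset.mem_univ, true_and] at hj
  rw [hj]

/-- The multilinear form with symmetric coefficients `c (cntIdx f)`. -/
noncomputable def polarForm {𝕜 : Type*} [RCLike 𝕜] (m n : ℕ) (c : (Fin n → ℕ) → 𝕜) :
    MultilinearMap 𝕜 (fun _ : Fin m => (Fin n → 𝕜)) 𝕜 :=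
  ∑ f : Fin m → Fin n, (MultilinearMap.mkPiRing 𝕜 (Fin m) (c (cntIdx f))).compLinearMap
    (fun j => LinearMap.proj (f j))

lemma polarForm_apply {𝕜 : Type*} [RCLike 𝕜] (m n : ℕ) (c : (Fin n → ℕ) → 𝕜)
    (x : Fin m → (Fin n → 𝕜)) :
    polarForm m n c x = ∑ f : Fin m → Fin n, (∏ j, x j (f j)) * c (cntIdx f) := by
  simp [polarForm]

lemma polarForm_symm {𝕜 : Type*} [RCLike 𝕜] (m n : ℕ) (c : (Fin n → ℕ) → 𝕜)
    (σ : Equiv.Perm (Fin m)) (x : Fin m → (Fin n → 𝕜)) :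
    polarForm m n c (fun j => x (σ j)) = polarForm m n c x := by
  rw [polarForm_apply, polarForm_apply]
  symm
  refine Fintype.sum_equiv (Equiv.arrowCongr σ.symm (Equiv.refl _)) _ _ fun f => ?_
  have : (Equiv.arrowCongr σ.symm (Equiv.refl _)) f = fun j => f (σ j) := by
    funext j; simp
  rw [this, cntIdx_perm]
  congr 1
  exact (Equiv.prod_comp σ (fun j => x j (f j))).symm

lemma polarForm_single {𝕜 : Type*} [RCLike 𝕜] (m n : ℕ) (c : (Fin n → ℕ) → 𝕜)
    (f : Fin m → Fin n) :
    polarForm m n c (fun j => Pi.single (f j) 1) = c (cntIdx f) := by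
  rw [polarForm_apply, Finset.sum_eq_single f]
  · simp
  · intro g _ hg
    obtain ⟨j, hj⟩ := Function.ne_iff.mp hg
    rw [Finset.prod_eq_zero (Finset.mem_univ j), zero_mul]
    simp [hj]
  · simp

lemma multinomial_le {m n : ℕ} (α : Fin n → ℕ) (hα : α ∈ Finset.Nat.antidiagonalTuple n m) :
    Nat.multinomial univ α ≤ m ! := by
  have h := Nat.multinomial_spec univ α
  rw [Finset.Nat.mem_antidiagonalTuple.mp hα] at h
  rw [← h]
  exact Nat.le_mul_of_pos_left _ (Finset.prod_pos fun i _ => Nat.factorial_pos _)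

/-- If `C` is a constant for the `m`-linear Hardy–Littlewood inequality on
`ℓ_p^n` (`p ≥ 2m`), and `M` is a polarization constant (`‖L‖ ≤ M‖P‖` for every
`m`-homogeneous polynomial `P` with polar `L`), then `(m!)^{(mp-p+2m)/(2mp)} · C · M` is a
constant for the polynomial Hardy–Littlewood inequality. -/
theorem polynomial_HL_from_multilinear_and_polarization {𝕜 : Type*} [RCLike 𝕜]
    (m : ℕ) (hm : 2 ≤ m) (p : ℝ) (hp : 2 * (m : ℝ) ≤ p)
    (C : ℝ) (hC : 0 < C) (M : ℝ) (hM : 0 < M)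
    (hmult : ∀ n : ℕ, 1 ≤ n → ∀ T : MultilinearMap 𝕜 (fun _ : Fin m => (Fin n → 𝕜)) 𝕜,
      (∑ f : Fin m → Fin n, ‖T (fun j => Pi.single (f j) 1)‖
          ^ (2 * (m : ℝ) * p / ((m : ℝ) * p + p - 2 * m)))
        ^ (((m : ℝ) * p + p - 2 * m) / (2 * (m : ℝ) * p)) ≤ C * multNorm p m n T)
    (hpolarization : ∀ n : ℕ, 1 ≤ n → ∀ a : (Fin n → ℕ) → 𝕜,
      ∀ L : MultilinearMap 𝕜 (fun _ : Fin m => (Fin n → 𝕜)) 𝕜,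
      (∀ (σ : Equiv.Perm (Fin m)) (x : Fin m → (Fin n → 𝕜)), L (fun j => x (σ j)) = L x) →
      (∀ x : Fin n → 𝕜,
        L (fun _ => x) = ∑ α ∈ Finset.Nat.antidiagonalTuple n m, a α * ∏ i, x i ^ α i) →
      multNorm p m n L ≤ M * polyNorm p m n a) :
    ∀ n : ℕ, 1 ≤ n → ∀ a : (Fin n → ℕ) → 𝕜,
      (∑ α ∈ Finset.Nat.antidiagonalTuple n m, ‖a α‖
          ^ (2 * (m : ℝ) * p / ((m : ℝ) * p + p - 2 * m)))
        ^ (((m : ℝ) * p + p - 2 * m) / (2 * (m : ℝ) * p)) ≤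
      (m ! : ℝ) ^ (((m : ℝ) * p - p + 2 * m) / (2 * (m : ℝ) * p)) * C * M *
        polyNorm p m n a := by
  intro n hn a
  have hm' : (2 : ℝ) ≤ m := by exact_mod_cast hm
  have hp0 : 0 < p := by linarith
  have hD : 0 < (m : ℝ) * p + p - 2 * m := by nlinarith
  have hN : 0 < 2 * (m : ℝ) * p := by positivity
  set q : ℝ := 2 * (m : ℝ) * p / ((m : ℝ) * p + p - 2 * m) with hq
  have hq0 : 0 < q := div_pos hN hD
  have hq1 : 1 ≤ q := by
    rw [hq, one_le_div hD]; nlinarith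
  have e1 : ((m : ℝ) * p + p - 2 * m) / (2 * (m : ℝ) * p) = 1 / q := by
    rw [hq, one_div_div]
  have e2 : ((m : ℝ) * p - p + 2 * m) / (2 * (m : ℝ) * p) = (q - 1) * (1 / q) := by
    have h1 : (q - 1) * (1 / q) = 1 - 1 / q := by field_simp
    rw [h1, ← e1]; field_simp; ring
  rw [e1, e2]
  have hc0 : ∀ α : Fin n → ℕ, 0 < (Nat.multinomial univ α : ℝ) := fun α => by
    exact_mod_cast Nat.multinomial_pos univ α
  set c : (Fin n → ℕ) → 𝕜 := fun α => a α / (Nat.multinomial univ α : 𝕜) with hc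
  have hT := hmult n hn (polarForm m n c)
  have hP := hpolarization n hn a (polarForm m n c) (polarForm_symm m n c) (by
    intro x
    rw [polarForm_apply]
    simp only [prod_cntIdx]
    rw [sum_cntIdx (fun α => (∏ i, x i ^ α i) * c α)]
    refine Finset.sum_congr rfl fun α _ => ?_
    have : (Nat.multinomial univ α : 𝕜) ≠ 0 := by
      exact_mod_cast (Nat.multinomial_pos univ α).ne'
    simp only [hc]
    field_simp)
  rw [e1] at hT
  simp only [polarForm_single] at hT
  rw [sum_cntIdx (fun α => ‖c α‖ ^ q)] at hT
  have hF : (0 : ℝ) < (m ! : ℝ) := by exact_mod_cast Nat.factorial_pos m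
  have hsum : ∑ α ∈ Finset.Nat.antidiagonalTuple n m, ‖a α‖ ^ q ≤
      (m ! : ℝ) ^ (q - 1) * ∑ α ∈ Finset.Nat.antidiagonalTuple n m,
        (Nat.multinomial univ α : ℝ) * ‖c α‖ ^ q := by
    rw [Finset.mul_sum]
    refine Finset.sum_le_sum fun α hα => ?_
    have hle : (Nat.multinomial univ α : ℝ) ^ (q - 1) ≤ (m ! : ℝ) ^ (q - 1) :=
      Real.rpow_le_rpow (hc0 α).le (by exact_mod_cast multinomial_le α hα) (by linarith)
    have hca : ‖a α‖ ^ q = (Nat.multinomial univ α : ℝ) ^ (q - 1) *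
        ((Nat.multinomial univ α : ℝ) * ‖c α‖ ^ q) := by
      have : ‖a α‖ = (Nat.multinomial univ α : ℝ) * ‖c α‖ := by
        simp only [hc, norm_div, RCLike.norm_natCast]
        have := (hc0 α).ne'
        field_simp
      rw [this, Real.mul_rpow (hc0 α).le (norm_nonneg _), Real.rpow_sub_one (hc0 α).ne']
      have := (hc0 α).ne'
      field_simp
    rw [hca]
    exact mul_le_mul_of_nonneg_right hle
      (mul_nonneg (hc0 α).le (Real.rpow_nonneg (norm_nonneg _) _))
  have hS0 : 0 ≤ ∑ α ∈ Finset.Nat.antidiagonalTuple n m,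
        (Nat.multinomial univ α : ℝ) * ‖c α‖ ^ q :=
    Finset.sum_nonneg fun α _ => mul_nonneg (hc0 α).le (Real.rpow_nonneg (norm_nonneg _) _)
  calc (∑ α ∈ Finset.Nat.antidiagonalTuple n m, ‖a α‖ ^ q) ^ (1 / q)
      ≤ ((m ! : ℝ) ^ (q - 1) * ∑ α ∈ Finset.Nat.antidiagonalTuple n m,
        (Nat.multinomial univ α : ℝ) * ‖c α‖ ^ q) ^ (1 / q) :=
        Real.rpow_le_rpow (Finset.sum_nonneg fun α _ => Real.rpow_nonneg (norm_nonneg _) _)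
          hsum (by positivity)
    _ = (m ! : ℝ) ^ ((q - 1) * (1 / q)) * (∑ α ∈ Finset.Nat.antidiagonalTuple n m,
        (Nat.multinomial univ α : ℝ) * ‖c α‖ ^ q) ^ (1 / q) := by
        rw [Real.mul_rpow (Real.rpow_nonneg hF.le _) hS0, Real.rpow_mul hF.le]
    _ ≤ (m ! : ℝ) ^ ((q - 1) * (1 / q)) * (C * (M * polyNorm p m n a)) :=
        mul_le_mul_of_nonneg_left
          (hT.trans (mul_le_mul_of_nonneg_left hP hC.le)) (Real.rpow_nonneg hF.le _)
    _ = (m ! : ℝ) ^ ((q - 1) * (1 / q)) * C * M * polyNorm p m n a := by ring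
end

section
/- Let m ≥ 2 be an integer and let p be a real number with 2m ≤ p < ∞. If D_ℂ > 0 is such that for every n ≥ 1 and every m-homogeneous polynomial Q(z) = ∑_{|α|=m} b_α z^α on the complex space ℓ_p^n one has (∑_{|α|=m} |b_α|^{2mp/(mp+p−2m)})^{(mp+p−2m)/(2mp)} ≤ D_ℂ·‖Q‖, then for every n ≥ 1 and every m-homogeneous polynomial P(x) = ∑_{|α|=m} a_α x^α on the real space ℓ_p^n one has (∑_{|α|=m} |a_α|^{2mp/(mp+p−2m)})^{(mp+p−2m)/(2mp)} ≤ 2^{m−1}·D_ℂ·‖P‖. -/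
open Finset

lemma aux_coeff_prod {ι : Type*} (s : Finset ι) (f : ι → Polynomial ℂ) (d : ι → ℕ)
    (hf : ∀ i ∈ s, (f i).natDegree ≤ d i) :
    (∏ i ∈ s, f i).natDegree ≤ ∑ i ∈ s, d i ∧
      (∏ i ∈ s, f i).coeff (∑ i ∈ s, d i) = ∏ i ∈ s, (f i).coeff (d i) := by
  classical
  induction s using Finset.induction_on with
  | empty => simp
  | insert i s hi ih =>
    have h1 := hf i (Finset.mem_insert_self i s)
    obtain ⟨h2, h3⟩ := ih (fun j hj => hf j (Finset.mem_insert_of_mem hj))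
    rw [Finset.prod_insert hi, Finset.sum_insert hi, Finset.prod_insert hi]
    refine ⟨Polynomial.natDegree_mul_le_of_le h1 h2, ?_⟩
    rw [Polynomial.coeff_mul_add_eq_of_natDegree_le h1 h2, h3]

lemma aux_roots (m : ℕ) (hm : 1 ≤ m) (ζ : ℂ) (hζ : IsPrimitiveRoot ζ m) (w : ℂ)
    (R : Polynomial ℂ) (hR : R.natDegree ≤ m) :
    ∑ k ∈ range m, R.eval (ζ ^ k * w) = m * (R.coeff 0 + R.coeff m * w ^ m) := by
  have h0 : ∀ k, R.eval (ζ ^ k * w) =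
      ∑ j ∈ range (m + 1), R.coeff j * w ^ j * (ζ ^ j) ^ k := by
    intro k
    rw [Polynomial.eval_eq_sum_range' (Nat.lt_succ_of_le hR)]
    refine Finset.sum_congr rfl fun j _ => ?_
    rw [mul_pow, ← pow_mul, ← pow_mul, mul_comm k j]; ring
  simp_rw [h0]
  rw [Finset.sum_comm, Finset.sum_range_succ]
  obtain ⟨l, rfl⟩ : ∃ l, m = l + 1 := ⟨m - 1, by omega⟩
  rw [Finset.sum_range_succ', Finset.sum_eq_zero]
  · simp [hζ.pow_eq_one]; ring
  · intro j hj
    rw [Finset.mem_range] at hj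
    rw [← Finset.mul_sum]
    have hne : ζ ^ (j + 1) ≠ 1 := hζ.pow_ne_one_of_pos_of_lt (by omega) (by omega)
    have : (ζ ^ (j + 1) - 1) * ∑ k ∈ range (l + 1), (ζ ^ (j + 1)) ^ k = 0 := by
      rw [mul_geom_sum, ← pow_mul, mul_comm (j + 1), pow_mul, hζ.pow_eq_one]; simp
    rcases mul_eq_zero.1 this with h | h
    · exact absurd (sub_eq_zero.1 h) hne
    · rw [h, mul_zero]

/-- The polynomial `λ ↦ P(λ z + conj z)`. -/
noncomputable def auxPoly (m n : ℕ) (a : (Fin n → ℕ) → ℝ) (z : Fin n → ℂ) : Polynomial ℂ :=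
  ∑ α ∈ Finset.Nat.antidiagonalTuple n m, Polynomial.C (a α : ℂ) *
    ∏ i, (Polynomial.C (z i) * Polynomial.X + Polynomial.C (starRingEnd ℂ (z i))) ^ α i

lemma aux_lin (a b : ℂ) (d : ℕ) :
    ((Polynomial.C a * Polynomial.X + Polynomial.C b) ^ d).natDegree ≤ d ∧
    ((Polynomial.C a * Polynomial.X + Polynomial.C b) ^ d).coeff d = a ^ d := by
  have h1 : (Polynomial.C a * Polynomial.X + Polynomial.C b).natDegree ≤ 1 :=
    Polynomial.natDegree_linear_le
  constructor
  · simpa using Polynomial.natDegree_pow_le_of_le d h1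
  · have := Polynomial.coeff_pow_of_natDegree_le (m := d) h1
    simpa using this

lemma auxPoly_deg (m n : ℕ) (a : (Fin n → ℕ) → ℝ) (z : Fin n → ℂ) :
    (auxPoly m n a z).natDegree ≤ m := by
  refine Polynomial.natDegree_sum_le_of_forall_le _ _ fun α hα => ?_
  rw [Finset.Nat.mem_antidiagonalTuple] at hα
  refine (Polynomial.natDegree_C_mul_le _ _).trans ?_
  rw [← hα]
  exact (aux_coeff_prod univ _ α (fun i _ => (aux_lin _ _ _).1)).1

lemma auxPoly_top (m n : ℕ) (a : (Fin n → ℕ) → ℝ) (z : Fin n → ℂ) :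
    (auxPoly m n a z).coeff m =
      ∑ α ∈ Finset.Nat.antidiagonalTuple n m, (a α : ℂ) * ∏ i, z i ^ α i := by
  rw [auxPoly, Polynomial.finsetSum_coeff]
  refine Finset.sum_congr rfl fun α hα => ?_
  rw [Finset.Nat.mem_antidiagonalTuple] at hα
  rw [Polynomial.coeff_C_mul, ← hα,
    (aux_coeff_prod univ _ α (fun i _ => (aux_lin _ _ _).1)).2]
  simp_rw [(aux_lin _ _ _).2]

lemma auxPoly_zero (m n : ℕ) (a : (Fin n → ℕ) → ℝ) (z : Fin n → ℂ) :
    (auxPoly m n a z).coeff 0 = starRingEnd ℂ (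
      ∑ α ∈ Finset.Nat.antidiagonalTuple n m, (a α : ℂ) * ∏ i, z i ^ α i) := by
  rw [Polynomial.coeff_zero_eq_eval_zero, auxPoly]
  simp [Polynomial.eval_finsetSum, Polynomial.eval_prod]

lemma auxPoly_eval (m n : ℕ) (a : (Fin n → ℕ) → ℝ) (z : Fin n → ℂ) (ω : ℂ) (hω : ‖ω‖ = 1) :
    (auxPoly m n a z).eval (ω ^ 2) = 2 ^ m * ω ^ m *
      ((∑ α ∈ Finset.Nat.antidiagonalTuple n m, a α * ∏ i, (ω * z i).re ^ α i : ℝ) : ℂ) := by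
  have hc : ω * starRingEnd ℂ ω = 1 := by
    rw [Complex.mul_conj, Complex.normSq_eq_norm_sq, hω]; simp
  have key : ∀ i, z i * ω ^ 2 + starRingEnd ℂ (z i) = (2 * ω) * (((ω * z i).re : ℝ) : ℂ) := by
    intro i
    rw [Complex.re_eq_add_conj, map_mul]
    linear_combination (-starRingEnd ℂ (z i)) * hc
  simp only [auxPoly, Polynomial.eval_finsetSum, Polynomial.eval_prod, Polynomial.eval_mul,
    Polynomial.eval_C, Polynomial.eval_pow, Polynomial.eval_add, Polynomial.eval_X, key]
  push_cast
  rw [Finset.mul_sum]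
  refine Finset.sum_congr rfl fun α hα => ?_
  rw [Finset.Nat.mem_antidiagonalTuple] at hα
  simp_rw [mul_pow (2 * ω)]
  rw [Finset.prod_mul_distrib, Finset.prod_pow_eq_pow_sum, hα, mul_pow]
  ring

lemma aux_bdd (p : ℝ) (hp : 0 < p) (m n : ℕ) (a : (Fin n → ℕ) → ℝ) :
    BddAbove {y : ℝ | ∃ x : Fin n → ℝ, lpNorm p x ≤ 1 ∧
      y = ‖∑ α ∈ Finset.Nat.antidiagonalTuple n m, a α * ∏ i, x i ^ α i‖} := by
  refine ⟨∑ α ∈ Finset.Nat.antidiagonalTuple n m, ‖a α‖, ?_⟩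
  rintro y ⟨x, hx, rfl⟩
  have hs : 0 ≤ ∑ i, ‖x i‖ ^ p := Finset.sum_nonneg fun i _ => by positivity
  have h1 : ∑ i, ‖x i‖ ^ p ≤ 1 := by
    by_contra! hlt
    exact absurd hx (not_le.2 (Real.one_lt_rpow hlt (by positivity)))
  have h2 : ∀ i, ‖x i‖ ≤ 1 := by
    intro i
    by_contra! hlt
    have h3 := Real.one_lt_rpow hlt hp
    have h4 : ‖x i‖ ^ p ≤ ∑ i, ‖x i‖ ^ p :=
      Finset.single_le_sum (f := fun i => ‖x i‖ ^ p) (fun i _ => by positivity) (mem_univ i)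
    linarith
  refine norm_sum_le_of_le _ fun α _ => ?_
  rw [norm_mul, norm_prod]
  refine mul_le_of_le_one_right (norm_nonneg _) ?_
  refine Finset.prod_le_one (fun i _ => norm_nonneg _) fun i _ => ?_
  rw [norm_pow]
  exact pow_le_one₀ (norm_nonneg _) (h2 i)

lemma aux_lp_zero (p : ℝ) (hp : 0 < p) (n : ℕ) : lpNorm p (0 : Fin n → ℂ) ≤ 1 := by
  simp [lpNorm, Real.zero_rpow hp.ne', Real.zero_rpow (inv_pos.2 hp).ne']

lemma aux_complexify (m : ℕ) (hm : 1 ≤ m) (p : ℝ) (hp : 0 < p) (n : ℕ)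
    (a : (Fin n → ℕ) → ℝ) :
    polyNorm p m n (fun α => (a α : ℂ)) ≤ 2 ^ (m - 1) * polyNorm p m n a := by
  refine csSup_le ⟨_, 0, aux_lp_zero p hp n, rfl⟩ ?_
  rintro y ⟨z, hz, rfl⟩
  set F : ℂ := ∑ α ∈ Finset.Nat.antidiagonalTuple n m, (a α : ℂ) * ∏ i, z i ^ α i with hF
  have hm0 : (m : ℂ) ≠ 0 := by exact_mod_cast (by omega : m ≠ 0)
  have hreal : ∀ ω : ℂ, ‖ω‖ = 1 →
      ‖(auxPoly m n a z).eval (ω ^ 2)‖ ≤ 2 ^ m * polyNorm p m n a := by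
    intro ω hω
    rw [auxPoly_eval m n a z ω hω, norm_mul, norm_mul, norm_pow, norm_pow, hω, Complex.norm_real]
    simp only [Complex.norm_ofNat, one_pow, mul_one]
    refine mul_le_mul_of_nonneg_left ?_ (by positivity)
    refine le_csSup (aux_bdd p hp m n a) ⟨fun i => (ω * z i).re, ?_, rfl⟩
    refine le_trans ?_ hz
    refine Real.rpow_le_rpow (Finset.sum_nonneg fun i _ => by positivity) ?_ (by positivity)
    refine Finset.sum_le_sum fun i _ => Real.rpow_le_rpow (norm_nonneg _) ?_ hp.le
    calc ‖(ω * z i).re‖ ≤ ‖ω * z i‖ := Complex.abs_re_le_norm _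
      _ = ‖z i‖ := by rw [norm_mul, hω, one_mul]
  set u : ℂ := Complex.exp (((-F.arg / m : ℝ) : ℂ) * Complex.I) with hu
  set η : ℂ := Complex.exp (((Real.pi / m : ℝ) : ℂ) * Complex.I) with hη
  have hun : ‖u‖ = 1 := Complex.norm_exp_ofReal_mul_I _
  have hηn : ‖η‖ = 1 := Complex.norm_exp_ofReal_mul_I _
  have hζ : IsPrimitiveRoot (η ^ 2) m := by
    have := Complex.isPrimitiveRoot_exp m (by omega)
    convert this using 1
    rw [hη, ← Complex.exp_nat_mul]
    congr 1
    push_cast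
    ring
  have hum : u ^ m = Complex.exp (-(F.arg * Complex.I)) := by
    rw [hu, ← Complex.exp_nat_mul]
    congr 1
    push_cast
    field_simp
  have hFe : (‖F‖ : ℂ) * Complex.exp (F.arg * Complex.I) = F := Complex.norm_mul_exp_arg_mul_I F
  have huF : u ^ m * F = ‖F‖ := by
    rw [hum]
    nth_rewrite 2 [← hFe]
    rw [mul_left_comm, ← Complex.exp_add]; simp
  have huc : starRingEnd ℂ (u ^ m) * u ^ m = 1 := by
    rw [mul_comm, Complex.mul_conj, Complex.normSq_eq_norm_sq, norm_pow, hun]; simp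
  have hcF : starRingEnd ℂ F = u ^ m * ‖F‖ := by
    have h1 := congrArg (starRingEnd ℂ) huF
    rw [map_mul, Complex.conj_ofReal] at h1
    linear_combination (u ^ m) * h1 - starRingEnd ℂ F * huc
  have hsum := aux_roots m hm (η ^ 2) hζ (u ^ 2) (auxPoly m n a z) (auxPoly_deg m n a z)
  rw [auxPoly_zero, auxPoly_top, ← hF] at hsum
  have hR : (m : ℂ) * (starRingEnd ℂ F + F * (u ^ 2) ^ m) = m * (u ^ m * (2 * ‖F‖)) := by
    rw [← pow_mul, mul_comm 2 m, pow_mul]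
    linear_combination (m : ℂ) * hcF + (m : ℂ) * u ^ m * huF
  rw [hR] at hsum
  have hle : ‖∑ k ∈ range m, (auxPoly m n a z).eval ((η ^ 2) ^ k * u ^ 2)‖ ≤
      ∑ _k ∈ range m, 2 ^ m * polyNorm p m n a := by
    refine norm_sum_le_of_le _ fun k _ => ?_
    have h2 := hreal (η ^ k * u) (by rw [norm_mul, norm_pow, hηn, hun]; simp)
    rwa [show (η ^ k * u) ^ 2 = (η ^ 2) ^ k * u ^ 2 by ring] at h2
  rw [hsum] at hle
  simp only [norm_mul, norm_pow, hun, Complex.norm_natCast, Complex.norm_ofNat, one_pow, one_mul,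
    Complex.norm_real, norm_norm, Finset.sum_const, Finset.card_range, nsmul_eq_mul] at hle
  have hmpos : (0 : ℝ) < m := by exact_mod_cast hm
  have h3 := le_of_mul_le_mul_left hle hmpos
  have h4 : (2 : ℝ) ^ m = 2 * 2 ^ (m - 1) := by
    rw [← pow_succ']; congr 1; omega
  rw [h4] at h3
  change ‖F‖ ≤ _
  linarith

/-- If `D_ℂ` is a constant for the complex polynomial Hardy–Littlewood
inequality, then `2^{m-1} · D_ℂ` is a constant for the real polynomial Hardy–Littlewood
inequality. -/
theorem real_HL_from_complex_HL (m : ℕ) (hm : 2 ≤ m)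
    (p : ℝ) (hp : 2 * (m : ℝ) ≤ p) (D : ℝ) (hD : 0 < D)
    (h : ∀ n : ℕ, 1 ≤ n → ∀ b : (Fin n → ℕ) → ℂ,
      (∑ α ∈ Finset.Nat.antidiagonalTuple n m, ‖b α‖
          ^ (2 * (m : ℝ) * p / ((m : ℝ) * p + p - 2 * m)))
        ^ (((m : ℝ) * p + p - 2 * m) / (2 * (m : ℝ) * p)) ≤ D * polyNorm p m n b) :
    ∀ n : ℕ, 1 ≤ n → ∀ a : (Fin n → ℕ) → ℝ,
      (∑ α ∈ Finset.Nat.antidiagonalTuple n m, ‖a α‖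
          ^ (2 * (m : ℝ) * p / ((m : ℝ) * p + p - 2 * m)))
        ^ (((m : ℝ) * p + p - 2 * m) / (2 * (m : ℝ) * p)) ≤
      2 ^ (m - 1) * D * polyNorm p m n a := by
  intro n hn a
  have hmR : (2 : ℝ) ≤ m := by exact_mod_cast hm
  have h1 := h n hn (fun α => (a α : ℂ))
  simp only [Complex.norm_real] at h1
  refine h1.trans ?_
  have h2 := aux_complexify m (by omega) p (by linarith) n a
  calc D * polyNorm p m n (fun α => (a α : ℂ))
      ≤ D * (2 ^ (m - 1) * polyNorm p m n a) := mul_le_mul_of_nonneg_left h2 hD.le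
    _ = _ := by ring
end

section
/- Let m, n be positive integers, let 1 ≤ k ≤ m be an integer, and let s, q, ρ be real numbers with 1 ≤ s ≤ q and m/ρ = k/s + (m−k)/q. Then for every scalar array (a_i)_{i ∈ M(m,n)} one has (∑_{i ∈ M(m,n)} |a_i|^ρ)^{1/ρ} ≤ ∏_{S ∈ P_k(m)} (∑_{i_S ∈ M(k,n)} (∑_{i_{Ŝ} ∈ M(m−k,n)} |a_i|^q)^{s/q})^{(1/s)·(1/C(m,k))}, where C(m,k) is the binomial coefficient. -/
open Finset

open MeasureTheory ENNReal in
theorem finner_aux {τ : Type*} {m n : ℕ} (T : Finset τ) (S : τ → Finset (Fin m))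
    (f : τ → (Fin m → Fin n) → ℝ≥0∞) (w : τ → ℝ) (hw : ∀ t ∈ T, 0 ≤ w t)
    (hdep : ∀ t ∈ T, ∀ x y : Fin m → Fin n, (∀ j ∈ S t, x j = y j) → f t x = f t y)
    (hsum : ∀ j, ∑ t ∈ T with j ∈ S t, w t = 1) (U : Finset (Fin m)) :
    ∀ x, lmarginal (fun _ => Measure.count) U (fun x => ∏ t ∈ T, f t x ^ w t) x ≤
      ∏ t ∈ T, (lmarginal (fun _ => Measure.count) (U ∩ S t) (f t) x) ^ w t := by
  induction U using Finset.induction with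
  | empty => intro x; simp
  | insert j U hj ih =>
    intro x
    rw [lmarginal_insert _ (measurable_of_finite _) hj]
    refine (lintegral_mono fun y => ih (Function.update x j y)).trans ?_
    have h1 : ∀ y, ∏ t ∈ T, (lmarginal (fun _ => Measure.count) (U ∩ S t) (f t)
        (Function.update x j y)) ^ w t =
        (∏ t ∈ T with j ∉ S t, (lmarginal (fun _ => Measure.count) (insert j U ∩ S t) (f t) x) ^ w t)
        * ∏ t ∈ T with j ∈ S t, (lmarginal (fun _ => Measure.count) (U ∩ S t) (f t)
        (Function.update x j y)) ^ w t := by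
      intro y
      rw [← Finset.prod_filter_mul_prod_filter_not T (fun t => j ∈ S t), mul_comm]
      congr 1
      refine Finset.prod_congr rfl fun t ht => ?_
      rw [Finset.mem_filter] at ht
      rw [Finset.insert_inter_of_notMem ht.2]
      congr 1
      rw [lmarginal_update_of_notMem (measurable_of_finite _) (by simp [hj])]
      congr 1
      funext z
      refine hdep t ht.1 _ _ fun i hi => ?_
      refine Function.update_of_ne ?_ _ _
      rintro rfl
      exact ht.2 hi
    simp_rw [h1]
    rw [lintegral_const_mul _ (measurable_of_finite _),
      ← Finset.prod_filter_mul_prod_filter_not T (fun t => j ∈ S t), mul_comm]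
    gcongr ?_ * _
    refine (ENNReal.lintegral_prod_norm_pow_le _ (fun i _ => (measurable_of_finite _).aemeasurable)
      (hsum j) (fun t ht => hw t (Finset.mem_filter.1 ht).1)).trans (le_of_eq ?_)
    refine Finset.prod_congr rfl fun t ht => ?_
    rw [Finset.mem_filter] at ht
    rw [Finset.insert_inter_of_mem ht.2, lmarginal_insert _ (measurable_of_finite _) (by simp [hj])]

open MeasureTheory in
theorem lmarginal_count_eq {m n : ℕ} (U : Finset (Fin m)) (F : (Fin m → Fin n) → ℝ)
    (hF : ∀ x, 0 ≤ F x) (x : Fin m → Fin n) :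
    lmarginal (fun _ => Measure.count) U (fun x => ENNReal.ofReal (F x)) x =
      ENNReal.ofReal (∑ g : {j : Fin m // j ∈ U} → Fin n,
        F (fun j => if hj : j ∈ U then g ⟨j, hj⟩ else x j)) := by
  rw [lmarginal, lintegral_fintype, ENNReal.ofReal_sum_of_nonneg (fun _ _ => hF _)]
  refine Finset.sum_congr rfl fun g _ => ?_
  rw [Measure.pi_singleton]
  simp [Function.updateFinset_def]

theorem sum_univ_subtype {m n : ℕ} (F : (Fin m → Fin n) → ℝ) (x : Fin m → Fin n) :
    (∑ g : {j : Fin m // j ∈ (univ : Finset (Fin m))} → Fin n,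
        F (fun j => if hj : j ∈ (univ : Finset (Fin m)) then g ⟨j, hj⟩ else x j)) = ∑ x, F x := by
  refine Fintype.sum_equiv (Equiv.arrowCongr (Equiv.subtypeUnivEquiv (fun j => Finset.mem_univ j))
    (Equiv.refl _)) _ _ fun g => ?_
  congr 1
  funext j
  simp

theorem finner_real {τ : Type*} {m n : ℕ} (T : Finset τ) (S : τ → Finset (Fin m))
    (F : τ → (Fin m → Fin n) → ℝ) (hF : ∀ t x, 0 ≤ F t x) (w : τ → ℝ) (hw : ∀ t ∈ T, 0 ≤ w t)
    (hdep : ∀ t ∈ T, ∀ x y : Fin m → Fin n, (∀ j ∈ S t, x j = y j) → F t x = F t y)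
    (hsum : ∀ j, ∑ t ∈ T with j ∈ S t, w t = 1) (x : Fin m → Fin n) :
    ∑ i, ∏ t ∈ T, F t i ^ w t ≤
      ∏ t ∈ T, (∑ g : {j : Fin m // j ∈ S t} → Fin n,
        F t (fun j => if hj : j ∈ S t then g ⟨j, hj⟩ else x j)) ^ w t := by
  have h := finner_aux T S (fun t x => ENNReal.ofReal (F t x)) w hw
    (fun t ht x y hxy => by rw [hdep t ht x y hxy]) hsum univ x
  have e1 : (fun x => ∏ t ∈ T, ENNReal.ofReal (F t x) ^ w t) =
      fun x => ENNReal.ofReal (∏ t ∈ T, F t x ^ w t) := by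
    funext x
    rw [ENNReal.ofReal_prod_of_nonneg (fun t _ => Real.rpow_nonneg (hF t x) _)]
    exact Finset.prod_congr rfl fun t ht => ENNReal.ofReal_rpow_of_nonneg (hF t x) (hw t ht)
  rw [e1, lmarginal_count_eq _ _ (fun x => Finset.prod_nonneg fun t _ =>
    Real.rpow_nonneg (hF t x) _), sum_univ_subtype (fun x => ∏ t ∈ T, F t x ^ w t)] at h
  have e2 : ∀ t, 0 ≤ ∑ g : {j : Fin m // j ∈ S t} → Fin n,
        F t (fun j => if hj : j ∈ S t then g ⟨j, hj⟩ else x j) :=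
    fun t => Finset.sum_nonneg fun _ _ => hF _ _
  simp_rw [Finset.univ_inter, lmarginal_count_eq _ _ (hF _)] at h
  rw [Finset.prod_congr rfl fun t ht => ENNReal.ofReal_rpow_of_nonneg (e2 t) (hw t ht),
    ← ENNReal.ofReal_prod_of_nonneg (fun t _ => Real.rpow_nonneg (e2 t) _)] at h
  exact (ENNReal.ofReal_le_ofReal_iff (Finset.prod_nonneg fun t _ => Real.rpow_nonneg (e2 t) _)).1 h

theorem card_mem_powersetCard {m k : ℕ} (hm : 0 < m) (hk : 1 ≤ k) (j : Fin m) :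
    m * #{S ∈ powersetCard k (univ : Finset (Fin m)) | j ∈ S} = k * m.choose k := by
  have h1 : {S ∈ powersetCard k (univ : Finset (Fin m)) | j ∉ S} = powersetCard k (univ.erase j) := by
    ext S
    simp only [mem_filter, mem_powersetCard, subset_erase]
    tauto
  have h2 := Finset.card_filter_add_card_filter_not (s := powersetCard k (univ : Finset (Fin m)))
    (fun S => j ∈ S)
  rw [h1] at h2
  simp at h2
  obtain ⟨m, rfl⟩ : ∃ m', m = m' + 1 := ⟨m - 1, by omega⟩
  obtain ⟨k, rfl⟩ : ∃ k', k = k' + 1 := ⟨k - 1, by omega⟩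
  have h3 := Nat.add_one_mul_choose_eq m k
  have h4 := Nat.choose_succ_succ m k
  simp at h2 h4
  have h5 : #{S ∈ powersetCard (k+1) (univ : Finset (Fin (m+1))) | j ∈ S} = m.choose k := by omega
  rw [h5, h3, mul_comm]

theorem blei_real (m n : ℕ) (hm : 0 < m) (hn : 0 < n)
    (k : ℕ) (hk1 : 1 ≤ k) (hkm : k ≤ m)
    (s q ρ : ℝ) (hs : 1 ≤ s) (hsq : s ≤ q)
    (hρ : (m : ℝ) / ρ = (k : ℝ) / s + ((m : ℝ) - k) / q)
    (a : (Fin m → Fin n) → ℝ) (ha : ∀ i, 0 ≤ a i) :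
    (∑ i : Fin m → Fin n, a i ^ ρ) ^ (1 / ρ) ≤
      ∏ S ∈ Finset.powersetCard k (Finset.univ : Finset (Fin m)),
        (∑ g : {j : Fin m // j ∈ S} → Fin n,
          (∑ h : {j : Fin m // j ∉ S} → Fin n,
            a (fun j => if hj : j ∈ S then g ⟨j, hj⟩ else h ⟨j, hj⟩) ^ q) ^ (s / q))
          ^ ((1 / s) * (1 / (m.choose k : ℝ))) := by
  have hs0 : 0 < s := by linarith
  have hq0 : 0 < q := by linarith
  have hm0 : (0 : ℝ) < m := by exact_mod_cast hm
  have hk0 : (0 : ℝ) < k := by exact_mod_cast hk1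
  have hkm' : (k : ℝ) ≤ m := by exact_mod_cast hkm
  have hC : (0 : ℝ) < m.choose k := by exact_mod_cast Nat.choose_pos hkm
  set C : ℝ := (m.choose k : ℝ) with hCdef
  have hρ0 : 0 < ρ := by
    have h1 : 0 < (m : ℝ) / ρ := by
      rw [hρ]
      have := div_pos hk0 hs0
      have : 0 ≤ ((m : ℝ) - k) / q := div_nonneg (by linarith) hq0.le
      linarith
    exact (div_pos_iff_of_pos_left hm0).1 h1
  let B : Finset (Fin m) → (Fin m → Fin n) → ℝ := fun S i =>
    ∑ h : {j : Fin m // j ∉ S} → Fin n, a (fun j => if hj : j ∈ S then i j else h ⟨j, hj⟩) ^ q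
  let N : Finset (Fin m) → ℝ := fun S => ∑ g : {j : Fin m // j ∈ S} → Fin n,
          (∑ h : {j : Fin m // j ∉ S} → Fin n,
            a (fun j => if hj : j ∈ S then g ⟨j, hj⟩ else h ⟨j, hj⟩) ^ q) ^ (s / q)
  have hBn : ∀ S i, 0 ≤ B S i := fun S i => Finset.sum_nonneg fun _ _ => Real.rpow_nonneg (ha _) _
  have hNn : ∀ S, 0 ≤ N S := fun S => Finset.sum_nonneg fun _ _ =>
    Real.rpow_nonneg (Finset.sum_nonneg fun _ _ => Real.rpow_nonneg (ha _) _) _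
  have hBdep : ∀ S x y, (∀ j ∈ S, x j = y j) → B S x = B S y := by
    intro S x y h
    simp only [B]
    refine Finset.sum_congr rfl fun g _ => ?_
    congr 2
    funext j
    split_ifs with hj
    · exact h j hj
    · rfl
  have hBpos : ∀ S i, 0 < a i → 0 < B S i := by
    intro S i hi
    refine Finset.sum_pos' (fun _ _ => Real.rpow_nonneg (ha _) _) ⟨fun j => i j, mem_univ _, ?_⟩
    simpa using Real.rpow_pos_of_pos hi q
  let w₁ : ℝ := ρ / (q * C)
  let w₂ : ℝ := ρ / (s * C) - ρ / (q * C)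
  have hw₁ : 0 ≤ w₁ := by positivity
  have hw₂ : 0 ≤ w₂ := by
    simp only [w₂, sub_nonneg]
    gcongr
  let P := Finset.powersetCard k (Finset.univ : Finset (Fin m))
  let F : Finset (Fin m) ⊕ Finset (Fin m) → (Fin m → Fin n) → ℝ :=
    Sum.elim (fun S i => a i ^ q * B S i ^ (s / q - 1)) (fun S i => B S i ^ (s / q))
  let x₀ : Fin m → Fin n := fun _ => ⟨0, hn⟩
  have key := finner_real (P.disjSum P) (Sum.elim (fun _ => univ) id) F
    (by
      rintro (S | S) x
      · exact mul_nonneg (Real.rpow_nonneg (ha _) _) (Real.rpow_nonneg (hBn _ _) _)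
      · exact Real.rpow_nonneg (hBn _ _) _)
    (Sum.elim (fun _ => w₁) (fun _ => w₂))
    (by rintro (S | S) _ <;> simpa)
    (by
      rintro (S | S) _ x y h
      · have : x = y := by
          funext j
          exact h j (by simp)
        rw [this]
      · simp only [F, Sum.elim_inr]
        rw [hBdep S x y h])
    (by
      intro j
      rw [Finset.sum_filter, Finset.sum_disjSum]
      change (∑ S ∈ P, if j ∈ (univ : Finset (Fin m)) then w₁ else 0) +
        (∑ S ∈ P, if j ∈ S then w₂ else 0) = 1
      simp only [Finset.mem_univ, if_true]
      rw [← Finset.sum_filter, Finset.sum_const, Finset.sum_const]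
      have hc : (m : ℝ) * (#{S ∈ P | j ∈ S} : ℝ) = k * C := by
        rw [hCdef]
        exact_mod_cast card_mem_powersetCard hm hk1 j
      have hc' : (#{S ∈ P | j ∈ S} : ℝ) = k * C / m := by
        rw [← hc]; field_simp
      rw [nsmul_eq_mul, nsmul_eq_mul, hc']
      have hP : (#P : ℝ) = C := by simp [P, hCdef]
      rw [hP]
      simp only [w₁, w₂]
      have : (m : ℝ) = ρ * (k / s + (m - k) / q) := by rw [← hρ]; field_simp
      field_simp at this ⊢
      linarith) x₀
  simp only [Finset.prod_disjSum] at key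
  have r1 : ∀ S, (∑ g : {j : Fin m // j ∈ (univ : Finset (Fin m))} → Fin n,
      (fun i => a i ^ q * B S i ^ (s / q - 1))
        (fun j => if hj : j ∈ (univ : Finset (Fin m)) then g ⟨j, hj⟩ else x₀ j)) = N S := by
    intro S
    rw [sum_univ_subtype (fun i => a i ^ q * B S i ^ (s / q - 1)),
      ← (Equiv.piEquivPiSubtypeProd (fun j => j ∈ S) (fun _ => Fin n)).symm.sum_comp,
      Fintype.sum_prod_type]
    refine Finset.sum_congr rfl fun g _ => ?_
    have hb : ∀ h : {j : Fin m // j ∉ S} → Fin n,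
        B S ((Equiv.piEquivPiSubtypeProd (fun j => j ∈ S) (fun _ => Fin n)).symm (g, h)) =
        ∑ h : {j : Fin m // j ∉ S} → Fin n,
            a (fun j => if hj : j ∈ S then g ⟨j, hj⟩ else h ⟨j, hj⟩) ^ q := by
      intro h
      simp only [B]
      refine Finset.sum_congr rfl fun h' _ => ?_
      congr 2
      funext j
      by_cases hj : j ∈ S <;> simp [hj, Equiv.piEquivPiSubtypeProd]
    simp_rw [hb]
    rw [← Finset.sum_mul]
    change (∑ h : {j : Fin m // j ∉ S} → Fin n,
            a (fun j => if hj : j ∈ S then g ⟨j, hj⟩ else h ⟨j, hj⟩) ^ q) * _ = _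
    set b := ∑ h : {j : Fin m // j ∉ S} → Fin n,
            a (fun j => if hj : j ∈ S then g ⟨j, hj⟩ else h ⟨j, hj⟩) ^ q with hbdef
    have hb0 : 0 ≤ b := Finset.sum_nonneg fun _ _ => Real.rpow_nonneg (ha _) _
    rcases hb0.eq_or_lt with h0 | h0
    · rw [← h0, zero_mul, Real.zero_rpow (by positivity)]
    · rw [Real.rpow_sub_one h0.ne']
      field_simp
  have r2 : ∀ S : Finset (Fin m), (∑ g : {j : Fin m // j ∈ S} → Fin n,
      B S (fun j => if hj : j ∈ S then g ⟨j, hj⟩ else x₀ j) ^ (s / q)) = N S := by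
    intro S
    refine Finset.sum_congr rfl fun g _ => ?_
    congr 1
    refine Finset.sum_congr rfl fun h' _ => ?_
    congr 2
    funext j
    by_cases hj : j ∈ S <;> simp [hj]
  have key2 : ∑ i, ((∏ S ∈ P, (a i ^ q * B S i ^ (s / q - 1)) ^ w₁) *
      ∏ S ∈ P, (B S i ^ (s / q)) ^ w₂) ≤ (∏ S ∈ P, N S ^ w₁) * ∏ S ∈ P, N S ^ w₂ := by
    refine key.trans (le_of_eq ?_)
    congr 1
    · refine Finset.prod_congr rfl fun S _ => ?_
      rw [← r1 S]
      rfl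
    · refine Finset.prod_congr rfl fun S _ => ?_
      rw [← r2 S]
      rfl
  have main : ∑ i, a i ^ ρ ≤ ∏ S ∈ P, N S ^ (ρ / (s * C)) := by
    calc ∑ i, a i ^ ρ ≤ _ := Finset.sum_le_sum fun i _ => ?_
      _ ≤ _ := key2
      _ = _ := ?_
    · rcases (ha i).eq_or_lt with h0 | h0
      · rw [← h0, Real.zero_rpow hρ0.ne']
        refine mul_nonneg (Finset.prod_nonneg fun S _ => Real.rpow_nonneg (mul_nonneg
          (Real.rpow_nonneg le_rfl _) (Real.rpow_nonneg (hBn _ _) _)) _) 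
          (Finset.prod_nonneg fun S _ => Real.rpow_nonneg (Real.rpow_nonneg (hBn _ _) _) _)
      · rw [← Finset.prod_mul_distrib]
        have : ∀ S ∈ P, (a i ^ q * B S i ^ (s / q - 1)) ^ w₁ * (B S i ^ (s / q)) ^ w₂ =
            a i ^ (ρ / C) := by
          intro S _
          have hb := hBpos S i h0
          rw [Real.mul_rpow (by positivity) (by positivity), ← Real.rpow_mul h0.le,
            ← Real.rpow_mul hb.le, ← Real.rpow_mul hb.le, mul_assoc, ← Real.rpow_add hb]
          have e1 : q * w₁ = ρ / C := by simp only [w₁]; field_simp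
          have e2 : (s / q - 1) * w₁ + s / q * w₂ = 0 := by
            simp only [w₁, w₂]; field_simp; ring
          rw [e1, e2, Real.rpow_zero, mul_one]
        rw [Finset.prod_congr rfl this, Finset.prod_const, ← Real.rpow_mul_natCast h0.le]
        have hP : (#P : ℝ) = C := by simp [P, hCdef]
        rw [hP, div_mul_cancel₀ _ hC.ne']
    · rw [← Finset.prod_mul_distrib]
      refine Finset.prod_congr rfl fun S _ => ?_
      rw [← Real.rpow_add_of_nonneg (hNn S) hw₁ hw₂]
      simp [w₁, w₂]
  calc (∑ i, a i ^ ρ) ^ (1 / ρ) ≤ (∏ S ∈ P, N S ^ (ρ / (s * C))) ^ (1 / ρ) :=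
        Real.rpow_le_rpow (Finset.sum_nonneg fun i _ => Real.rpow_nonneg (ha i) _) main
          (by positivity)
    _ = ∏ S ∈ P, N S ^ ((1 / s) * (1 / C)) := by
        rw [← Real.finsetProd_rpow _ _ (fun S _ => Real.rpow_nonneg (hNn S) _)]
        refine Finset.prod_congr rfl fun S _ => ?_
        rw [← Real.rpow_mul (hNn S)]
        congr 1
        field_simp


/-- generalized Blei inequality, Bayart–Pellegrino–Seoane.
For `1 ≤ k ≤ m`, `1 ≤ s ≤ q` and `m/ρ = k/s + (m-k)/q`, every scalar array
`(a_i)_{i ∈ M(m,n)}` satisfies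
`(∑_i |a_i|^ρ)^{1/ρ} ≤ ∏_{S ∈ P_k(m)} (∑_{i_S} (∑_{i_Ŝ} |a_i|^q)^{s/q})^{(1/s)(1/C(m,k))}`. -/
theorem blei_interpolation {𝕜 : Type*} [RCLike 𝕜] (m n : ℕ) (hm : 0 < m) (hn : 0 < n)
    (k : ℕ) (hk1 : 1 ≤ k) (hkm : k ≤ m)
    (s q ρ : ℝ) (hs : 1 ≤ s) (hsq : s ≤ q)
    (hρ : (m : ℝ) / ρ = (k : ℝ) / s + ((m : ℝ) - k) / q)
    (a : (Fin m → Fin n) → 𝕜) :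
    (∑ i : Fin m → Fin n, ‖a i‖ ^ ρ) ^ (1 / ρ) ≤
      ∏ S ∈ Finset.powersetCard k (Finset.univ : Finset (Fin m)),
        (∑ g : {j : Fin m // j ∈ S} → Fin n,
          (∑ h : {j : Fin m // j ∉ S} → Fin n,
            ‖a (fun j => if hj : j ∈ S then g ⟨j, hj⟩ else h ⟨j, hj⟩)‖ ^ q) ^ (s / q))
          ^ ((1 / s) * (1 / (m.choose k : ℝ))) := by
  exact blei_real m n hm hn k hk1 hkm s q ρ hs hsq hρ (fun i => ‖a i‖) (fun i => norm_nonneg _)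
end

section
/- Let m, n be positive integers and let s be a real number with 1 ≤ s ≤ 2. For every m-homogeneous polynomial P(z) = ∑_{|α|=m} a_α z^α on ℂ^n with complex coefficients, (∑_{|α|=m} |a_α|²)^{1/2} ≤ (2/s)^{m/2} · (∫_{𝕋^n} |P(z)|^s dμ^n(z))^{1/s}, where 𝕋^n = {z ∈ ℂ^n : |z_i| = 1 for all i} is the n-dimensional torus and μ^n is its normalized Haar measure. -/
open Finset MeasureTheory


namespace Bayart

/-- The standard parametrization of the unit circle. -/
noncomputable def ee (t : ℝ) : ℂ := Complex.exp (((2 * Real.pi * t : ℝ) : ℂ) * Complex.I)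

lemma norm_ee (t : ℝ) : ‖ee t‖ = 1 := by
  unfold ee; exact Complex.norm_exp_ofReal_mul_I _

lemma continuous_ee : Continuous ee := by
  unfold ee; fun_prop

lemma ee_conj (t : ℝ) : (starRingEnd ℂ) (ee t) * ee t = 1 := by
  rw [mul_comm, Complex.mul_conj, Complex.normSq_eq_norm_sq, norm_ee]; simp

lemma norm_r_ee {r : ℝ} (hr0 : 0 ≤ r) (hr1 : r ≤ 1) (t : ℝ) : ‖(r : ℂ) * ee t‖ ≤ 1 := by
  rw [norm_mul, norm_ee, Complex.norm_real, Real.norm_of_nonneg hr0]; linarith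

lemma int_ee_pow (j k : ℕ) :
    ∫ t in (0:ℝ)..1, (starRingEnd ℂ) (ee t) ^ k * ee t ^ j = if j = k then 1 else 0 := by
  have h1 : ∀ t : ℝ, (starRingEnd ℂ) (ee t) ^ k * ee t ^ j
      = Complex.exp ((((j : ℂ) - k) * (2 * Real.pi * Complex.I)) * t) := by
    intro t
    unfold ee
    rw [← Complex.exp_conj, ← Complex.exp_nat_mul, ← Complex.exp_nat_mul, ← Complex.exp_add]
    congr 1
    rw [map_mul, Complex.conj_ofReal, Complex.conj_I]
    push_cast
    ring
  simp_rw [h1]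
  split_ifs with h
  · subst h; simp
  · have hne : ((j : ℂ) - k) * (2 * Real.pi * Complex.I) ≠ 0 := by
      apply mul_ne_zero
      · rw [sub_ne_zero]; exact_mod_cast h
      · exact Complex.two_pi_I_ne_zero
    rw [integral_exp_mul_complex hne]
    have : Complex.exp (((j : ℂ) - k) * (2 * Real.pi * Complex.I) * ((1:ℝ):ℂ)) = 1 := by
      have := Complex.exp_int_mul_two_pi_mul_I ((j : ℤ) - k)
      rw [← this]; congr 1; push_cast; ring
    rw [this]; simp

lemma interval_conj (φ : ℝ → ℂ) : ∫ t in (0:ℝ)..1, (starRingEnd ℂ) (φ t)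
    = (starRingEnd ℂ) (∫ t in (0:ℝ)..1, φ t) := by
  rw [intervalIntegral.integral_of_le zero_le_one, intervalIntegral.integral_of_le zero_le_one]
  exact integral_conj

lemma exists_coeff {R : ℝ} (hR : 1 < R) {h : ℂ → ℂ} (hd : DifferentiableOn ℂ h (Metric.ball 0 R)) :
    ∃ c : ℕ → ℂ, Summable (fun k => ‖c k‖) ∧ ∀ z : ℂ, ‖z‖ ≤ 1 →
      HasSum (fun k => c k * z ^ k) (h z) := by
  have key : ∀ z : ℂ, ‖z‖ ≤ 1 →
      HasSum (fun k => ((k.factorial : ℂ)⁻¹ * iteratedDeriv k h 0) * z ^ k) (h z) := by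
    intro z hz
    have := Complex.hasSum_taylorSeries_on_ball hd (z := z) (by simp; linarith)
    have e : (fun k : ℕ => ((k.factorial : ℂ)⁻¹ * iteratedDeriv k h 0) * z ^ k)
        = fun k : ℕ => (k.factorial : ℂ)⁻¹ • (z - 0) ^ k • iteratedDeriv k h 0 := by
      ext k; simp only [smul_eq_mul, sub_zero]; ring
    rw [e]; exact this
  refine ⟨_, ?_, key⟩
  have := (key 1 (by simp)).summable.norm
  simpa using this

lemma hasSum_int (φ : ℝ → ℂ) (hφ : Continuous φ) {c : ℕ → ℂ} {h : ℂ → ℂ}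
    (hc : Summable (fun k => ‖c k‖)) (hs : ∀ z : ℂ, ‖z‖ ≤ 1 → HasSum (fun k => c k * z ^ k) (h z))
    {r : ℝ} (hr0 : 0 ≤ r) (hr1 : r ≤ 1) :
    HasSum (fun k => c k * (r:ℂ) ^ k * ∫ t in (0:ℝ)..1, φ t * ee t ^ k)
      (∫ t in (0:ℝ)..1, φ t * h (r * ee t)) := by
  have h1 : ∀ k, c k * (r:ℂ) ^ k * ∫ t in (0:ℝ)..1, φ t * ee t ^ k
      = ∫ t in (0:ℝ)..1, φ t * (c k * ((r:ℂ) * ee t) ^ k) := by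
    intro k
    rw [← intervalIntegral.integral_const_mul]
    congr 1; ext t; rw [mul_pow]; ring
  simp_rw [h1]
  apply intervalIntegral.hasSum_integral_of_dominated_convergence (fun k t => ‖φ t‖ * ‖c k‖)
  · intro k
    have := continuous_ee
    exact (by fun_prop : Continuous _).aestronglyMeasurable
  · intro k
    refine Filter.Eventually.of_forall fun t _ => ?_
    rw [norm_mul, norm_mul, norm_pow]
    gcongr
    exact mul_le_of_le_one_right (norm_nonneg _) (pow_le_one₀ (norm_nonneg _) (norm_r_ee hr0 hr1 t))
  · exact Filter.Eventually.of_forall fun t _ => hc.mul_left _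
  · simp_rw [tsum_mul_left]
    exact (by fun_prop : Continuous _).intervalIntegrable _ _
  · exact Filter.Eventually.of_forall fun t _ => (hs _ (norm_r_ee hr0 hr1 t)).mul_left _

lemma cont_ee {R : ℝ} (hR : 1 < R) {h : ℂ → ℂ} (hd : DifferentiableOn ℂ h (Metric.ball 0 R))
    {r : ℝ} (hr0 : 0 ≤ r) (hr1 : r ≤ 1) : Continuous fun t => h (r * ee t) := by
  refine hd.continuousOn.comp_continuous (by have := continuous_ee; fun_prop) fun t => ?_
  have := norm_r_ee hr0 hr1 t
  simp only [Metric.mem_ball, dist_zero_right]; linarith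

lemma parseval {c d : ℕ → ℂ} {h g : ℂ → ℂ} (hg : Continuous fun t => g (ee t))
    (hc : Summable (fun k => ‖c k‖)) (hs : ∀ z : ℂ, ‖z‖ ≤ 1 → HasSum (fun k => c k * z ^ k) (h z))
    (hd : Summable (fun k => ‖d k‖)) (hds : ∀ z : ℂ, ‖z‖ ≤ 1 → HasSum (fun k => d k * z ^ k) (g z))
    {r : ℝ} (hr0 : 0 ≤ r) (hr1 : r ≤ 1) :
    HasSum (fun k => c k * (r:ℂ) ^ k * (starRingEnd ℂ) (d k))
      (∫ t in (0:ℝ)..1, (starRingEnd ℂ) (g (ee t)) * h (r * ee t)) := by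
  have := hasSum_int (fun t => (starRingEnd ℂ) (g (ee t))) (Complex.continuous_conj.comp hg) hc hs hr0 hr1
  convert this using 3 with k
  have h2 := hasSum_int (fun t => (starRingEnd ℂ) (ee t) ^ k)
    (by have := continuous_ee; fun_prop) hd hds (r := 1) (by simp) le_rfl
  simp only [int_ee_pow] at h2
  have h4 : HasSum (fun j => d j * ((1:ℝ):ℂ) ^ j * (if j = k then (1:ℂ) else 0)) (d k) := by
    convert hasSum_ite_eq k (d k) using 2 with j
    by_cases hb : j = k <;> simp [hb]
  have h3 := h4.unique h2
  rw [h3, ← interval_conj]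
  congr 1; ext t; simp [mul_comm]

lemma selfadj {R : ℝ} (hR : 1 < R) {h g : ℂ → ℂ} (hh : DifferentiableOn ℂ h (Metric.ball 0 R))
    (hg : DifferentiableOn ℂ g (Metric.ball 0 R)) {r : ℝ} (hr0 : 0 ≤ r) (hr1 : r ≤ 1) :
    ∫ t in (0:ℝ)..1, (starRingEnd ℂ) (g (ee t)) * h (r * ee t) =
    ∫ t in (0:ℝ)..1, (starRingEnd ℂ) (g (r * ee t)) * h (ee t) := by
  obtain ⟨c, hc, hcs⟩ := exists_coeff hR hh
  obtain ⟨d, hd, hds⟩ := exists_coeff hR hg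
  have ch : Continuous fun t => h (ee t) := by
    simpa using cont_ee hR hh (r := 1) (by simp) le_rfl
  have cg : Continuous fun t => g (ee t) := by
    simpa using cont_ee hR hg (r := 1) (by simp) le_rfl
  have h1 := parseval cg hc hcs hd hds hr0 hr1
  have h2 := parseval ch hd hds hc hcs hr0 hr1
  have h3 := Complex.hasSum_conj'.mpr h2
  rw [← interval_conj] at h3
  refine h1.unique ?_
  convert h3 using 2
  · simp; ring
  · congr 1; ext t; simp; ring

lemma mean_value {R : ℝ} (hR : 1 < R) {h : ℂ → ℂ} (hh : DifferentiableOn ℂ h (Metric.ball 0 R))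
    {r : ℝ} (hr0 : 0 ≤ r) (hr1 : r ≤ 1) :
    ∫ t in (0:ℝ)..1, h (r * ee t) = h 0 := by
  obtain ⟨c, hc, hcs⟩ := exists_coeff hR hh
  have h1 := hasSum_int (fun _ => 1) continuous_const hc hcs hr0 hr1
  have h2 := hcs 0 (by simp)
  simp only [one_mul] at h1
  refine h1.unique ?_
  convert h2 using 2 with k
  have := int_ee_pow k 0
  simp only [pow_zero, one_mul] at this
  rw [this]
  by_cases hk : k = 0 <;> simp [hk]

lemma contraction {R : ℝ} (hR : 1 < R) {h : ℂ → ℂ} (hh : DifferentiableOn ℂ h (Metric.ball 0 R))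
    (h0 : h 0 = 0) {r : ℝ} (hr0 : 0 ≤ r) (hr1 : r ≤ 1) :
    ∫ t in (0:ℝ)..1, ‖h (r * ee t)‖ ^ 2 ≤ r ^ 2 * ∫ t in (0:ℝ)..1, ‖h (ee t)‖ ^ 2 := by
  obtain ⟨c, hc, hcs⟩ := exists_coeff hR hh
  have c0 : c 0 = 0 := by
    have h1 := hcs 0 (by simp)
    rw [h0] at h1
    refine (hasSum_single 0 ?_ |>.unique h1 |> fun h => by simpa using h)
    intro b hb; simp [hb]
  have key : ∀ r : ℝ, 0 ≤ r → r ≤ 1 → HasSum (fun k => ‖c k‖ ^ 2 * (r ^ 2) ^ k)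
      (∫ t in (0:ℝ)..1, ‖h (r * ee t)‖ ^ 2) := by
    intro r hr0 hr1
    have hcr : Continuous fun t => (fun z => h (r * z)) (ee t) := cont_ee hR hh hr0 hr1
    have hs : Summable fun k => ‖c k * (r:ℂ) ^ k‖ := by
      refine hc.of_nonneg_of_le (fun _ => norm_nonneg _) fun k => ?_
      rw [norm_mul, norm_pow, Complex.norm_real, Real.norm_of_nonneg hr0]
      exact mul_le_of_le_one_right (norm_nonneg _) (pow_le_one₀ hr0 hr1)
    have := parseval (g := fun z => h (r * z)) (d := fun k => c k * (r:ℂ) ^ k) hcr hc hcs hs ?_ hr0 hr1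
    · have h5 := Complex.hasSum_re this
      convert h5 using 1
      · ext k
        have : c k * (r:ℂ) ^ k * (starRingEnd ℂ) (c k * (r:ℂ) ^ k) = ((‖c k‖ ^ 2 * (r ^ 2) ^ k : ℝ) : ℂ) := by
          rw [Complex.mul_conj, Complex.normSq_eq_norm_sq, norm_mul, norm_pow, Complex.norm_real,
            Real.norm_of_nonneg hr0]
          push_cast; ring
        rw [this, Complex.ofReal_re]
      · have : ∀ t, (starRingEnd ℂ) (h (r * ee t)) * h (r * ee t) = ((‖h (r * ee t)‖ ^ 2 : ℝ) : ℂ) := by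
          intro t
          rw [mul_comm, Complex.mul_conj, Complex.normSq_eq_norm_sq]
        simp only [this]
        rw [intervalIntegral.integral_ofReal, Complex.ofReal_re]
    · intro z hz
      have := hcs (r * z) (by
        rw [norm_mul, Complex.norm_real, Real.norm_of_nonneg hr0]
        exact mul_le_one₀ hr1 (norm_nonneg _) hz)
      convert this using 2 with k
      rw [mul_pow]; ring
  have k1 := key r hr0 hr1
  have k2 := key 1 (by simp) le_rfl
  simp only [Complex.ofReal_one, one_mul, one_pow, mul_one] at k2
  refine hasSum_le ?_ k1 (k2.mul_left (r ^ 2))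
  intro k
  rcases k with _ | k
  · simp [c0]
  · rw [mul_comm]
    gcongr
    rw [pow_succ]
    exact mul_le_of_le_one_left (by positivity) (pow_le_one₀ (by positivity) (pow_le_one₀ hr0 hr1))

end Bayart

namespace Bayart

/-- Tails of the logarithmic series. -/
noncomputable def QQ (m : ℕ) (x : ℂ) : ℂ :=
  -Complex.log (1 - x) - ∑ j ∈ range m, x ^ (j + 1) / ((j : ℂ) + 1)

lemma QQ_succ (m : ℕ) (x : ℂ) : QQ m x = QQ (m + 1) x + x ^ (m + 1) / ((m : ℂ) + 1) := by
  unfold QQ; rw [sum_range_succ]; ring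

/-- The closed form of the kernel. -/
noncomputable def KK (x : ℂ) : ℝ :=
  ((1 - ‖x‖ ^ 2) / ‖1 - x‖ ^ 2) * Real.log ((1 - ‖x‖ ^ 2) / ‖1 - x‖ ^ 2)
    - 2 * (-Complex.log (1 - x) / (1 - x)).re

lemma norm_QQ_le (m : ℕ) {x : ℂ} (hx : ‖x‖ < 1) :
    ‖QQ m x‖ ≤ ‖x‖ ^ (m + 1) * (1 - ‖x‖)⁻¹ := by
  have h1 := Complex.hasSum_taylorSeries_neg_log' hx
  have h2 := (hasSum_nat_add_iff' m).mpr h1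
  have h3 : QQ m x = -Complex.log (1 - x) - ∑ j ∈ range m, x ^ (j + 1) / ((j : ℂ) + 1) := rfl
  rw [← h3] at h2
  have h4 : HasSum (fun n => ‖x‖ ^ (m + 1) * ‖x‖ ^ n) (‖x‖ ^ (m + 1) * (1 - ‖x‖)⁻¹) :=
    (hasSum_geometric_of_lt_one (norm_nonneg _) hx).mul_left _
  refine h2.norm_le_of_bounded h4 fun n => ?_
  rw [norm_div, norm_pow, ← pow_add]
  have : (1:ℝ) ≤ ‖((n + m : ℕ) : ℂ) + 1‖ := by
    have : ‖((n + m : ℕ) : ℂ) + 1‖ = ((n + m : ℕ) : ℝ) + 1 := by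
      rw [← Nat.cast_succ, Complex.norm_natCast]; push_cast; rfl
    rw [this]
    have : (0:ℝ) ≤ ((n + m : ℕ) : ℝ) := by positivity
    linarith
  rw [show n + m + 1 = m + 1 + n by ring]
  exact div_le_self (by positivity) this

lemma telescope1 (N : ℕ) (x : ℂ) :
    ∑ m ∈ range N, ‖QQ m x‖ ^ 2 = N * ‖QQ N x‖ ^ 2 + ∑ m ∈ range N, ‖x‖ ^ (2 * (m + 1)) / ((m : ℝ) + 1)
      + 2 * (∑ m ∈ range N, (starRingEnd ℂ) x ^ (m + 1) * QQ (m + 1) x).re := by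
  induction N with
  | zero => simp
  | succ N ih =>
    rw [sum_range_succ, ih, sum_range_succ, sum_range_succ]
    have e : ‖QQ N x‖ ^ 2 = ‖QQ (N + 1) x‖ ^ 2 + ‖x‖ ^ (2 * (N + 1)) / ((N : ℝ) + 1) ^ 2
        + 2 / ((N : ℝ) + 1) * ((starRingEnd ℂ) x ^ (N + 1) * QQ (N + 1) x).re := by
      rw [QQ_succ N x]
      generalize QQ (N + 1) x = q
      have : ‖q + x ^ (N + 1) / ((N : ℂ) + 1)‖ ^ 2 = ‖q‖ ^ 2 + ‖x ^ (N + 1) / ((N : ℂ) + 1)‖ ^ 2 +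
        2 * (q * (starRingEnd ℂ) (x ^ (N + 1) / ((N : ℂ) + 1))).re := by
        simp only [← Complex.normSq_eq_norm_sq]
        rw [Complex.normSq_add]
      rw [this]
      have h1 : ‖x ^ (N + 1) / ((N : ℂ) + 1)‖ ^ 2 = ‖x‖ ^ (2 * (N + 1)) / ((N : ℝ) + 1) ^ 2 := by
        rw [norm_div, norm_pow, ← Nat.cast_succ, Complex.norm_natCast]
        push_cast; rw [div_pow]; ring
      have h2 : q * (starRingEnd ℂ) (x ^ (N + 1) / ((N : ℂ) + 1))
          = ((1 / ((N : ℝ) + 1) : ℝ) : ℂ) * ((starRingEnd ℂ) x ^ (N + 1) * q) := by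
        simp; ring
      rw [h1, h2, Complex.re_ofReal_mul]; ring
    have hN : (N : ℝ) + 1 ≠ 0 := by positivity
    rw [Complex.add_re]
    have e2 := congrArg (fun y => ((N : ℝ) + 1) * y) e
    field_simp at e2
    push_cast
    field_simp
    linarith

lemma telescope2 (N : ℕ) (x : ℂ) :
    (1 - (starRingEnd ℂ) x) * ∑ m ∈ range N, (starRingEnd ℂ) x ^ (m + 1) * QQ (m + 1) x
      = (starRingEnd ℂ) x * QQ 0 x - ((∑ m ∈ range N, ‖x‖ ^ (2 * (m + 1)) / ((m : ℝ) + 1) : ℝ) : ℂ)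
        - (starRingEnd ℂ) x ^ (N + 1) * QQ N x := by
  induction N with
  | zero => simp
  | succ N ih =>
    rw [sum_range_succ, mul_add, ih, sum_range_succ, QQ_succ N x]
    have h : ((‖x‖ ^ (2 * (N + 1)) / ((N : ℝ) + 1) : ℝ) : ℂ)
        = (starRingEnd ℂ) x ^ (N + 1) * (x ^ (N + 1) / ((N : ℂ) + 1)) := by
      push_cast
      rw [pow_mul, ← Complex.mul_conj']
      rw [mul_pow]; ring
    rw [Complex.ofReal_add, h]
    ring

lemma hasSum_KK {x : ℂ} (hx : ‖x‖ < 1) : HasSum (fun m => ‖QQ m x‖ ^ 2) (KK x) := by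
  rw [hasSum_iff_tendsto_nat_of_nonneg (fun _ => by positivity)]
  have hx1 : (1 - x) ≠ 0 := by
    intro h; rw [sub_eq_zero] at h; rw [← h] at hx; simp at hx
  have hx2 : 1 - (starRingEnd ℂ) x ≠ 0 := by
    intro h; apply hx1
    have := congrArg (starRingEnd ℂ) h
    simpa using this
  have hx3 : ‖x‖ ^ 2 < 1 := by nlinarith [norm_nonneg x]
  have hq0 : QQ 0 x = - Complex.log (1 - x) := by simp [QQ]
  have l1 : Filter.Tendsto (fun N => ∑ m ∈ range N, ‖x‖ ^ (2 * (m + 1)) / ((m : ℝ) + 1)) Filter.atTop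
      (nhds (-Real.log (1 - ‖x‖ ^ 2))) := by
    have := (Real.hasSum_pow_div_log_of_abs_lt_one (x := ‖x‖ ^ 2) (by rwa [abs_of_nonneg (by positivity)])).tendsto_sum_nat
    refine this.congr fun N => ?_
    refine sum_congr rfl fun m _ => ?_
    rw [pow_mul]
  have l2 : Filter.Tendsto (fun N : ℕ => (N : ℝ) * ‖QQ N x‖ ^ 2) Filter.atTop (nhds 0) := by
    have h0 := (tendsto_self_mul_const_pow_of_lt_one (r := ‖x‖ ^ 2) (by positivity) hx3).mul_const
      (‖x‖ ^ 2 * ((1 - ‖x‖)⁻¹) ^ 2)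
    rw [zero_mul] at h0
    refine squeeze_zero (fun N => by positivity) (fun N => ?_) h0
    calc (N : ℝ) * ‖QQ N x‖ ^ 2 ≤ N * (‖x‖ ^ (N + 1) * (1 - ‖x‖)⁻¹) ^ 2 := by
          gcongr; exact norm_QQ_le N hx
      _ = _ := by ring
  have l3 : Filter.Tendsto (fun N : ℕ => (starRingEnd ℂ) x ^ (N + 1) * QQ N x) Filter.atTop (nhds 0) := by
    have h0 := ((tendsto_pow_atTop_nhds_zero_of_lt_one (r := ‖x‖ ^ 2) (by positivity) hx3).mul_const
      (‖x‖ ^ 2 * (1 - ‖x‖)⁻¹))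
    rw [zero_mul] at h0
    refine squeeze_zero_norm (fun N => ?_) h0
    rw [norm_mul, norm_pow, RCLike.norm_conj]
    calc ‖x‖ ^ (N + 1) * ‖QQ N x‖ ≤ ‖x‖ ^ (N + 1) * (‖x‖ ^ (N + 1) * (1 - ‖x‖)⁻¹) := by
          gcongr; exact norm_QQ_le N hx
      _ = _ := by ring
  have l4 : Filter.Tendsto (fun N => ∑ m ∈ range N, (starRingEnd ℂ) x ^ (m + 1) * QQ (m + 1) x)
      Filter.atTop (nhds ((1 - (starRingEnd ℂ) x)⁻¹ *
        ((starRingEnd ℂ) x * QQ 0 x - ((-Real.log (1 - ‖x‖ ^ 2) : ℝ) : ℂ) - 0))) := by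
    have := ((tendsto_const_nhds (x := (starRingEnd ℂ) x * QQ 0 x)).sub
      ((Complex.continuous_ofReal.tendsto _).comp l1)).sub l3 |>.const_mul (1 - (starRingEnd ℂ) x)⁻¹
    refine this.congr fun N => ?_
    simp only [Function.comp]
    rw [← telescope2, inv_mul_cancel_left₀ hx2]
  have l5 := (l2.add l1).add ((((Complex.continuous_re.tendsto _).comp l4)).const_mul 2)
  simp only [← telescope1, Function.comp] at l5
  have : (0 + -Real.log (1 - ‖x‖ ^ 2) + 2 * ((1 - (starRingEnd ℂ) x)⁻¹ *
        ((starRingEnd ℂ) x * QQ 0 x - ((-Real.log (1 - ‖x‖ ^ 2) : ℝ) : ℂ) - 0)).re) = KK x := by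
    unfold KK
    rw [hq0]
    have hn : ‖1 - x‖ ≠ 0 := norm_ne_zero_iff.mpr hx1
    rw [Real.log_div (by linarith) (by positivity), Real.log_pow]
    have hl : Real.log ‖1 - x‖ = (Complex.log (1 - x)).re := (Complex.log_re _).symm
    rw [hl]
    generalize Complex.log (1 - x) = L
    generalize Real.log (1 - ‖x‖ ^ 2) = l
    have e1 : (1 - (starRingEnd ℂ) x)⁻¹ = (1 - x) / ((‖1 - x‖ ^ 2 : ℝ) : ℂ) := by
      rw [inv_eq_one_div, div_eq_div_iff hx2 (by exact_mod_cast (pow_ne_zero 2 hn))]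
      push_cast
      rw [← Complex.mul_conj']; simp
    have e2 : -L / (1 - x) = -L * (1 - (starRingEnd ℂ) x) / ((‖1 - x‖ ^ 2 : ℝ) : ℂ) := by
      rw [div_eq_div_iff hx1 (by exact_mod_cast (pow_ne_zero 2 hn))]
      push_cast
      rw [← Complex.mul_conj']; simp; ring
    rw [e1, e2, div_mul_eq_mul_div, Complex.div_ofReal_re, Complex.div_ofReal_re]
    have e3 : ‖1 - x‖ ^ 2 = (1 - x.re) ^ 2 + x.im ^ 2 := by
      rw [← Complex.normSq_eq_norm_sq, Complex.normSq_apply]; simp; ring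
    have e4 : ‖x‖ ^ 2 = x.re ^ 2 + x.im ^ 2 := by
      rw [← Complex.normSq_eq_norm_sq, Complex.normSq_apply]; ring
    have e5 : (1 - x.re) ^ 2 + x.im ^ 2 ≠ 0 := by rw [← e3]; positivity
    rw [e3, e4]
    simp
    field_simp
    ring
  rwa [this] at l5

end Bayart

namespace Bayart

lemma sdpi {R : ℝ} (hR : 1 < R) {F : ℂ → ℂ} (hF : DifferentiableOn ℂ F (Metric.ball 0 R))
    (hpos : ∀ z ∈ Metric.ball (0:ℂ) R, 0 < (F z).re) (hF0 : F 0 = 1)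
    {r : ℝ} (hr0 : 0 ≤ r) (hr1 : r ≤ 1) :
    ∫ t in (0:ℝ)..1, (F (r * ee t)).re * Real.log (F (r * ee t)).re ≤
      r ^ 2 * ∫ t in (0:ℝ)..1, (F (ee t)).re * Real.log (F (ee t)).re := by
  set b : ℂ → ℂ := fun z => (F z - 1) / (F z + 1) with hb
  have hne : ∀ z ∈ Metric.ball (0:ℂ) R, F z + 1 ≠ 0 := by
    intro z hz h
    have := hpos z hz
    have h2 := congrArg Complex.re h
    simp at h2; linarith
  have hbd : DifferentiableOn ℂ b (Metric.ball 0 R) := by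
    apply DifferentiableOn.div (hF.sub_const 1) (hF.add_const 1) hne
  have hb1 : ∀ z ∈ Metric.ball (0:ℂ) R, ‖b z‖ < 1 := by
    intro z hz
    have h0 := hne z hz
    rw [hb]; simp only
    rw [norm_div, div_lt_one (norm_pos_iff.mpr h0)]
    apply lt_of_pow_lt_pow_left₀ 2 (norm_nonneg _)
    rw [← Complex.normSq_eq_norm_sq, ← Complex.normSq_eq_norm_sq, Complex.normSq_apply, Complex.normSq_apply]
    have := hpos z hz
    simp; nlinarith
  have hu : ∀ z ∈ Metric.ball (0:ℂ) R, (1 - ‖b z‖ ^ 2) / ‖1 - b z‖ ^ 2 = (F z).re := by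
    intro z hz
    have h0 := hne z hz
    have e1 : 1 - b z = 2 / (F z + 1) := by
      rw [hb]; field_simp; ring
    have e2 : b z = (F z - 1) / (F z + 1) := rfl
    have h3 : ‖F z + 1‖ ^ 2 ≠ 0 := by have := norm_ne_zero_iff.mpr h0; positivity
    rw [e1, e2, norm_div, norm_div, div_pow, div_pow]
    have h4 : ‖F z + 1‖ ^ 2 - ‖F z - 1‖ ^ 2 = 4 * (F z).re := by
      rw [← Complex.normSq_eq_norm_sq, ← Complex.normSq_eq_norm_sq, Complex.normSq_apply, Complex.normSq_apply]
      simp; ring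
    rw [one_sub_div h3, h4]
    have : ‖(2:ℂ)‖ = 2 := by simp
    rw [this]
    field_simp; norm_num; ring
  have hb0 : b 0 = 0 := by simp [hb, hF0]
  have hslit : ∀ z ∈ Metric.ball (0:ℂ) R, 1 - b z ∈ Complex.slitPlane := by
    intro z hz
    left
    have := (Complex.abs_re_le_norm (b z)).trans_lt (hb1 z hz)
    have := (abs_lt.mp this).2
    simp; linarith
  have hlog : DifferentiableOn ℂ (fun z => -Complex.log (1 - b z)) (Metric.ball 0 R) :=
    ((hbd.const_sub 1).clog hslit).neg
  set ψ : ℂ → ℂ := fun z => -Complex.log (1 - b z) / (1 - b z) with hψ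
  have hψd : DifferentiableOn ℂ ψ (Metric.ball 0 R) :=
    hlog.div (hbd.const_sub 1) fun z hz => Complex.slitPlane_ne_zero (hslit z hz)
  have hψ0 : ψ 0 = 0 := by simp [hψ, hb0]
  have hQ : ∀ m, DifferentiableOn ℂ (fun z => QQ m (b z)) (Metric.ball 0 R) := by
    intro m
    unfold QQ
    refine hlog.sub ?_
    refine DifferentiableOn.fun_sum fun j _ => ?_
    exact (hbd.pow _).div_const _
  have hQ0 : ∀ m, QQ m (b 0) = 0 := by
    intro m; rw [hb0]; simp [QQ]
  have hmem : ∀ r : ℝ, 0 ≤ r → r ≤ 1 → ∀ t, (r:ℂ) * ee t ∈ Metric.ball (0:ℂ) R := by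
    intro r hr0 hr1 t
    have := norm_r_ee hr0 hr1 t
    simp only [Metric.mem_ball, dist_zero_right]; linarith
  have hpt : ∀ z ∈ Metric.ball (0:ℂ) R, KK (b z) = (F z).re * Real.log (F z).re - 2 * (ψ z).re := by
    intro z hz
    unfold KK; rw [hu z hz]
  have hcF : ∀ r : ℝ, 0 ≤ r → r ≤ 1 →
      Continuous fun t => (F (r * ee t)).re * Real.log (F (r * ee t)).re := by
    intro r hr0 hr1
    have h1 : Continuous fun t => (F (r * ee t)).re := Complex.continuous_re.comp (cont_ee hR hF hr0 hr1)
    exact h1.mul (h1.log fun t => (hpos _ (hmem r hr0 hr1 t)).ne')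
  have hcψ : ∀ r : ℝ, 0 ≤ r → r ≤ 1 → Continuous fun t => (ψ (r * ee t)).re := fun r hr0 hr1 =>
    Complex.continuous_re.comp (cont_ee hR hψd hr0 hr1)
  have hcK : ∀ r : ℝ, 0 ≤ r → r ≤ 1 → Continuous fun t => KK (b (r * ee t)) := by
    intro r hr0 hr1
    have : (fun t => KK (b (r * ee t))) = fun t => (F (r * ee t)).re * Real.log (F (r * ee t)).re
        - 2 * (ψ (r * ee t)).re := by
      ext t; exact hpt _ (hmem r hr0 hr1 t)
    rw [this]
    exact (hcF r hr0 hr1).sub ((hcψ r hr0 hr1).const_mul 2)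
  have hInt : ∀ r : ℝ, 0 ≤ r → r ≤ 1 → ∫ t in (0:ℝ)..1, (F (r * ee t)).re * Real.log (F (r * ee t)).re
      = ∫ t in (0:ℝ)..1, KK (b (r * ee t)) := by
    intro r hr0 hr1
    have : (fun t => KK (b (r * ee t))) = fun t => (F (r * ee t)).re * Real.log (F (r * ee t)).re
        - 2 * (ψ (r * ee t)).re := by
      ext t; exact hpt _ (hmem r hr0 hr1 t)
    rw [this, intervalIntegral.integral_sub ((hcF r hr0 hr1).intervalIntegrable _ _)
      (((hcψ r hr0 hr1).const_mul 2).intervalIntegrable _ _), intervalIntegral.integral_const_mul]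
    have h1 := mean_value hR hψd hr0 hr1
    have h2 : ∫ t in (0:ℝ)..1, (ψ (r * ee t)).re = (∫ t in (0:ℝ)..1, ψ (r * ee t)).re := by
      have := Complex.reCLM.intervalIntegral_comp_comm
        ((cont_ee hR hψd hr0 hr1).intervalIntegrable (μ := volume) 0 1)
      simpa using this
    rw [h2, h1, hψ0]; simp
  have hsum : ∀ r : ℝ, 0 ≤ r → r ≤ 1 →
      HasSum (fun m => ∫ t in (0:ℝ)..1, ‖QQ m (b (r * ee t))‖ ^ 2) (∫ t in (0:ℝ)..1, KK (b (r * ee t))) := by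
    intro r hr0 hr1
    have hs : ∀ t, HasSum (fun m => ‖QQ m (b (r * ee t))‖ ^ 2) (KK (b (r * ee t))) := fun t =>
      hasSum_KK (hb1 _ (hmem r hr0 hr1 t))
    apply intervalIntegral.hasSum_integral_of_dominated_convergence
      (fun m t => ‖QQ m (b (r * ee t))‖ ^ 2)
    · intro m
      exact ((cont_ee hR (hQ m) hr0 hr1).norm.pow 2).aestronglyMeasurable
    · intro m
      refine Filter.Eventually.of_forall fun t _ => ?_
      rw [Real.norm_of_nonneg (by positivity)]
    · exact Filter.Eventually.of_forall fun t _ => (hs t).summable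
    · have : (fun t => ∑' m, ‖QQ m (b (r * ee t))‖ ^ 2) = fun t => KK (b (r * ee t)) := by
        ext t; exact (hs t).tsum_eq
      rw [this]; exact (hcK r hr0 hr1).intervalIntegrable _ _
    · exact Filter.Eventually.of_forall fun t _ => hs t
  have h1 := hInt 1 (by simp) le_rfl
  have s1 := hsum 1 (by simp) le_rfl
  simp only [Complex.ofReal_one, one_mul] at h1 s1
  rw [hInt r hr0 hr1, h1]
  refine hasSum_le (fun m => ?_) (hsum r hr0 hr1) (s1.mul_left (r ^ 2))
  exact contraction hR (hQ m) (hQ0 m) hr0 hr1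

/-- Gibbs variational inequality. -/
lemma gibbs {ρ v : ℝ → ℝ} (hρ : Continuous ρ) (hρ0 : ∀ t, 0 < ρ t) (hv : Continuous v)
    (h1 : ∫ t in (0:ℝ)..1, ρ t = 1) :
    (∫ t in (0:ℝ)..1, ρ t * v t) - ∫ t in (0:ℝ)..1, ρ t * Real.log (ρ t) ≤
      Real.log (∫ t in (0:ℝ)..1, Real.exp (v t)) := by
  have hce : Continuous fun t => Real.exp (v t) := hv.rexp
  have hcl : Continuous fun t => ρ t * Real.log (ρ t) := hρ.mul (hρ.log fun t => (hρ0 t).ne')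
  have hcv : Continuous fun t => ρ t * v t := hρ.mul hv
  set Z := ∫ t in (0:ℝ)..1, Real.exp (v t) with hZ
  have hZ0 : 0 < Z := by
    apply intervalIntegral.intervalIntegral_pos_of_pos (hce.intervalIntegrable _ _)
      (fun t => Real.exp_pos _) zero_lt_one
  have hpt : ∀ t, ρ t * v t - ρ t * Real.log (ρ t) - ρ t * Real.log Z ≤ Real.exp (v t) / Z - ρ t := by
    intro t
    have := Real.log_le_sub_one_of_pos (x := Real.exp (v t) / (Z * ρ t))
      (div_pos (Real.exp_pos _) (mul_pos hZ0 (hρ0 t)))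
    rw [Real.log_div (Real.exp_pos _).ne' (mul_pos hZ0 (hρ0 t)).ne', Real.log_exp,
      Real.log_mul hZ0.ne' (hρ0 t).ne'] at this
    have h2 := mul_le_mul_of_nonneg_left this (hρ0 t).le
    have h3 : ρ t * (Real.exp (v t) / (Z * ρ t) - 1) = Real.exp (v t) / Z - ρ t := by
      have := (hρ0 t).ne'
      field_simp
    rw [h3] at h2
    linarith
  have hI : ∫ t in (0:ℝ)..1, (ρ t * v t - ρ t * Real.log (ρ t) - ρ t * Real.log Z) ≤
      ∫ t in (0:ℝ)..1, (Real.exp (v t) / Z - ρ t) :=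
    intervalIntegral.integral_mono_on (a := 0) (b := 1) zero_le_one (μ := volume)
    (((hcv.sub hcl).sub (hρ.mul_const (Real.log Z))).intervalIntegrable _ _)
    (((hce.div_const Z).sub hρ).intervalIntegrable _ _) (fun t _ => hpt t)
  have e1 : ∫ t in (0:ℝ)..1, (ρ t * v t - ρ t * Real.log (ρ t) - ρ t * Real.log Z) =
      (∫ t in (0:ℝ)..1, (ρ t * v t - ρ t * Real.log (ρ t))) - ∫ t in (0:ℝ)..1, ρ t * Real.log Z :=
    intervalIntegral.integral_sub ((hcv.sub hcl).intervalIntegrable _ _)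
      ((hρ.mul_const (Real.log Z)).intervalIntegrable _ _)
  have e2 : ∫ t in (0:ℝ)..1, (Real.exp (v t) / Z - ρ t) =
      (∫ t in (0:ℝ)..1, Real.exp (v t) / Z) - ∫ t in (0:ℝ)..1, ρ t :=
    intervalIntegral.integral_sub ((hce.div_const Z).intervalIntegrable _ _) (hρ.intervalIntegrable _ _)
  rw [e1, e2, intervalIntegral.integral_sub
    (hcv.intervalIntegrable _ _) (hcl.intervalIntegrable _ _),
    intervalIntegral.integral_mul_const, intervalIntegral.integral_div, h1, ← hZ, div_self hZ0.ne'] at hI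
  linarith

end Bayart

namespace Bayart

lemma exists_log {R : ℝ} (hR : 0 < R) {f : ℂ → ℂ} (hf : Differentiable ℂ f)
    (h0 : ∀ z ∈ Metric.ball (0:ℂ) R, f z ≠ 0) :
    ∃ h : ℂ → ℂ, DifferentiableOn ℂ h (Metric.ball 0 R) ∧
      ∀ z ∈ Metric.ball (0:ℂ) R, Complex.exp (h z) = f z := by
  have hd : DifferentiableOn ℂ (fun z => deriv f z / f z) (Metric.ball 0 R) :=
    (hf.differentiableOn.deriv Metric.isOpen_ball).div hf.differentiableOn h0
  obtain ⟨h, hh0, hh⟩ := hd.isExactOn_ball.with_val_at 0 (Complex.log (f 0))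
  have hz0 : (0:ℂ) ∈ Metric.ball (0:ℂ) R := by simpa using hR
  refine ⟨h, fun z hz => (hh z hz).differentiableAt.differentiableWithinAt, fun z hz => ?_⟩
  have hder : ∀ w ∈ Metric.ball (0:ℂ) R, HasDerivAt (fun w => f w * Complex.exp (- h w)) 0 w := by
    intro w hw
    have h1 := (hf w).hasDerivAt.fun_mul ((hh w hw).fun_neg.cexp)
    refine h1.congr_deriv ?_
    have h2 := h0 w hw
    have h3 : f w * (deriv f w / f w) = deriv f w := mul_div_cancel₀ _ h2
    linear_combination (-Complex.exp (-h w)) * h3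
  have hc := Metric.isOpen_ball.is_const_of_deriv_eq_zero (convex_ball (0:ℂ) R).isPreconnected
    (fun w hw => (hder w hw).differentiableAt.differentiableWithinAt)
    (fun w hw => (hder w hw).deriv) hz hz0
  simp only [hh0] at hc
  rw [Complex.exp_neg, Complex.exp_neg, Complex.exp_log (h0 0 hz0), mul_inv_cancel₀ (h0 0 hz0)] at hc
  have := Complex.exp_ne_zero (h z)
  field_simp at hc
  exact hc.symm

noncomputable def EE (j k : ℕ) (z : ℂ) : ℂ := if j = k then 1 else if k < j then 2 * z ^ (j - k) else 0

lemma EE_add (j k : ℕ) (t : ℝ) : EE j k (ee t) + (starRingEnd ℂ) (EE k j (ee t)) =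
    2 * (ee t ^ j * (starRingEnd ℂ) (ee t ^ k)) := by
  have h := ee_conj t
  have h' : ∀ k, (starRingEnd ℂ) (ee t) ^ k * ee t ^ k = 1 := by
    intro k; rw [← mul_pow, h, one_pow]
  unfold EE
  rcases lt_trichotomy j k with hjk | hjk | hjk
  · obtain ⟨d, rfl⟩ := Nat.exists_eq_add_of_lt hjk
    have e : j + d + 1 - j = d + 1 := by omega
    rw [if_neg (by omega), if_neg (by omega), if_neg (by omega), if_pos (by omega), e]
    simp only [map_mul, map_pow, map_ofNat, zero_add, add_assoc, pow_add]
    linear_combination (-2 * (starRingEnd ℂ) (ee t) ^ d * (starRingEnd ℂ) (ee t) ^ 1) * h' j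
  · subst hjk
    simp only [if_true, map_one, map_pow]
    linear_combination (-2) * h' j
  · obtain ⟨d, rfl⟩ := Nat.exists_eq_add_of_lt hjk
    have e : k + d + 1 - k = d + 1 := by omega
    rw [if_neg (by omega), if_pos (by omega), if_neg (by omega), if_neg (by omega), e]
    simp only [map_zero, map_pow, add_zero, add_assoc, pow_add]
    linear_combination (-2 * (ee t) ^ d * (ee t) ^ 1) * h' k

lemma exists_F (N : ℕ) (c : ℕ → ℂ) : ∃ F : ℂ → ℂ, Differentiable ℂ F ∧ (F 0).im = 0 ∧
    ∀ t, (F (ee t)).re = ‖∑ k ∈ range N, c k * ee t ^ k‖ ^ 2 := by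
  refine ⟨fun z => ∑ j ∈ range N, ∑ k ∈ range N, c j * (starRingEnd ℂ) (c k) * EE j k z, ?_, ?_, ?_⟩
  · refine Differentiable.fun_sum fun j _ => Differentiable.fun_sum fun k _ => ?_
    refine Differentiable.const_mul ?_ _
    unfold EE
    split_ifs <;> fun_prop
  · rw [Complex.im_sum]
    refine Finset.sum_eq_zero fun j _ => ?_
    rw [Complex.im_sum]
    refine Finset.sum_eq_zero fun k _ => ?_
    unfold EE
    split_ifs with h1 h2
    · subst h1; rw [mul_one, Complex.mul_conj]; simp
    · rw [zero_pow (by omega)]; simp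
    · simp
  · intro t
    set g := ∑ k ∈ range N, c k * ee t ^ k with hg
    set S := ∑ j ∈ range N, ∑ k ∈ range N, c j * (starRingEnd ℂ) (c k) * EE j k (ee t) with hS
    have h1 : S + (starRingEnd ℂ) S = 2 * (g * (starRingEnd ℂ) g) := by
      have h2 : (starRingEnd ℂ) S = ∑ j ∈ range N, ∑ k ∈ range N,
          c j * (starRingEnd ℂ) (c k) * (starRingEnd ℂ) (EE k j (ee t)) := by
        rw [Finset.sum_comm]
        simp only [hS, map_sum, map_mul, Complex.conj_conj]
        refine Finset.sum_congr rfl fun j _ => Finset.sum_congr rfl fun k _ => by ring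
      rw [h2, hS, ← Finset.sum_add_distrib, hg, map_sum, Finset.sum_mul_sum, Finset.mul_sum]
      refine Finset.sum_congr rfl fun j _ => ?_
      rw [← Finset.sum_add_distrib, Finset.mul_sum]
      refine Finset.sum_congr rfl fun k _ => ?_
      rw [← mul_add, EE_add, map_mul]; ring
    rw [Complex.add_conj, Complex.mul_conj, Complex.normSq_eq_norm_sq] at h1
    have h3 : 2 * S.re = 2 * ‖g‖ ^ 2 := by exact_mod_cast h1
    linarith

lemma ex_ee {z : ℂ} (hz : ‖z‖ = 1) : ∃ t : ℝ, ee t = z := by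
  refine ⟨Complex.arg z / (2 * Real.pi), ?_⟩
  unfold ee
  have := Complex.norm_mul_exp_arg_mul_I z
  rw [hz] at this
  have hpi := Real.pi_ne_zero
  rw [mul_div_cancel₀ _ (by positivity)]
  simpa using this

lemma re_pos_disc {F : ℂ → ℂ} (hF : Differentiable ℂ F) (h : ∀ t, 0 < (F (ee t)).re) :
    ∃ R : ℝ, 1 < R ∧ ∀ z ∈ Metric.ball (0:ℂ) R, 0 < (F z).re := by
  have hsph : ∀ z : ℂ, ‖z‖ = 1 → 0 < (F z).re := by
    intro z hz
    obtain ⟨t, rfl⟩ := ex_ee hz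
    exact h t
  have hne : (Metric.sphere (0:ℂ) 1).Nonempty := ⟨1, by simp⟩
  have hcr : Continuous fun z => (F z).re := Complex.continuous_re.comp hF.continuous
  obtain ⟨w, hw, hmin⟩ := (isCompact_sphere (0:ℂ) 1).exists_isMinOn hne hcr.continuousOn
  have hw0 := hsph w (by simpa using hw)
  have hcl : ∀ z ∈ Metric.closedBall (0:ℂ) 1, 0 < (F z).re := by
    intro z hz
    have := Complex.norm_le_of_forall_mem_frontier_norm_le (f := fun z => Complex.exp (-F z))
      (U := Metric.ball (0:ℂ) 1) (C := Real.exp (-(F w).re)) Metric.isBounded_ball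
      (hF.neg.cexp.diffContOnCl) (fun z hz => ?_) (z := z) ?_
    · rw [Complex.norm_exp, Real.exp_le_exp] at this
      simp at this; linarith
    · rw [frontier_ball (0:ℂ) one_ne_zero] at hz
      rw [Complex.norm_exp, Real.exp_le_exp]
      have := hmin hz
      simp at this ⊢; exact this
    · rw [closure_ball (0:ℂ) one_ne_zero]; exact hz
  obtain ⟨δ, hδ, hsub⟩ := (isCompact_closedBall (0:ℂ) 1).exists_thickening_subset_open
    (isOpen_lt continuous_const hcr) (fun z hz => hcl z hz)
  rw [thickening_closedBall hδ zero_le_one] at hsub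
  exact ⟨δ + 1, by linarith, fun z hz => hsub hz⟩

lemma ne_disc {f : ℂ → ℂ} (hf : Continuous f) (h : ∀ z, ‖z‖ ≤ 1 → f z ≠ 0) :
    ∃ R : ℝ, 1 < R ∧ ∀ z ∈ Metric.ball (0:ℂ) R, f z ≠ 0 := by
  obtain ⟨δ, hδ, hsub⟩ := (isCompact_closedBall (0:ℂ) 1).exists_thickening_subset_open
    (isOpen_ne_fun hf continuous_const) (fun z hz => h z (by simpa using hz))
  rw [thickening_closedBall hδ zero_le_one] at hsub
  exact ⟨δ + 1, by linarith, fun z hz => hsub hz⟩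

lemma integral_re {φ : ℝ → ℂ} (h : Continuous φ) :
    ∫ t in (0:ℝ)..1, (φ t).re = (∫ t in (0:ℝ)..1, φ t).re := by
  have := Complex.reCLM.intervalIntegral_comp_comm (h.intervalIntegrable (μ := volume) 0 1)
  simpa using this

/-- self-adjointness of the Poisson semigroup on real parts -/
lemma selfadj_re {R : ℝ} (hR : 1 < R) {F h : ℂ → ℂ} (hF : DifferentiableOn ℂ F (Metric.ball 0 R))
    (hh : DifferentiableOn ℂ h (Metric.ball 0 R)) {r : ℝ} (hr0 : 0 ≤ r) (hr1 : r ≤ 1) :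
    ∫ t in (0:ℝ)..1, (F (ee t)).re * (h (r * ee t)).re =
    ∫ t in (0:ℝ)..1, (F (r * ee t)).re * (h (ee t)).re := by
  have pt : ∀ u v : ℂ, u.re * v.re = (1/2) * ((u * v).re + ((starRingEnd ℂ) u * v).re) := by
    intro u v; simp; ring
  have hmaps : ∀ z ∈ Metric.ball (0:ℂ) R, (r:ℂ) * z ∈ Metric.ball (0:ℂ) R := by
    intro z hz
    simp only [Metric.mem_ball, dist_zero_right, norm_mul, Complex.norm_real, Real.norm_eq_abs,
      abs_of_nonneg hr0] at hz ⊢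
    nlinarith [norm_nonneg z]
  have hdr : DifferentiableOn ℂ (fun z : ℂ => (r:ℂ) * z) (Metric.ball 0 R) := by fun_prop
  have hhr : DifferentiableOn ℂ (fun z => h (r * z)) (Metric.ball 0 R) := hh.comp hdr hmaps
  have hFr : DifferentiableOn ℂ (fun z => F (r * z)) (Metric.ball 0 R) := hF.comp hdr hmaps
  have c1 : Continuous fun t => F (ee t) := by simpa using cont_ee hR hF zero_le_one le_rfl
  have c2 : Continuous fun t => h (ee t) := by simpa using cont_ee hR hh zero_le_one le_rfl
  have c3 := cont_ee hR hF hr0 hr1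
  have c4 := cont_ee hR hh hr0 hr1
  have m1 := mean_value hR (hF.mul hhr) zero_le_one le_rfl
  have m2 := mean_value hR (hFr.mul hh) zero_le_one le_rfl
  simp only [Complex.ofReal_one, one_mul, mul_zero, Pi.mul_apply] at m1 m2
  have s := selfadj hR hh hF hr0 hr1
  have key : ∀ {φ ψ : ℝ → ℂ}, Continuous φ → Continuous ψ → 
      ∫ t in (0:ℝ)..1, (φ t).re * (ψ t).re = (1/2) * ((∫ t in (0:ℝ)..1, φ t * ψ t).re +
        (∫ t in (0:ℝ)..1, (starRingEnd ℂ) (φ t) * ψ t).re) := by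
    intro φ ψ hφ hψ
    have hφ' : Continuous fun t => (starRingEnd ℂ) (φ t) := Complex.continuous_conj.comp hφ
    have d1 : Continuous fun t => φ t * ψ t := hφ.mul hψ
    have d2 : Continuous fun t => (starRingEnd ℂ) (φ t) * ψ t := hφ'.mul hψ
    have d3 : Continuous fun t => (φ t * ψ t).re := Complex.continuous_re.comp d1
    have d4 : Continuous fun t => ((starRingEnd ℂ) (φ t) * ψ t).re := Complex.continuous_re.comp d2
    simp only [pt]
    rw [intervalIntegral.integral_const_mul, intervalIntegral.integral_add
      (d3.intervalIntegrable _ _) (d4.intervalIntegrable _ _), integral_re d1, integral_re d2]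
  rw [key c1 c4, key c3 c2, m1, m2, s]

lemma core {R : ℝ} (hR : 1 < R) {F h : ℂ → ℂ} (hF : DifferentiableOn ℂ F (Metric.ball 0 R))
    (hpos : ∀ z ∈ Metric.ball (0:ℂ) R, 0 < (F z).re) (hF0 : F 0 = 1)
    (hh : DifferentiableOn ℂ h (Metric.ball 0 R)) {r : ℝ} (hr0 : 0 < r) (hr1 : r ≤ 1)
    {M : ℝ} (hM : 0 < M) (hMF : ∀ t, M * (F (ee t)).re = Real.exp (2 * (h (r * ee t)).re)) :
    r ^ 2 * Real.log M ≤ Real.log (∫ t in (0:ℝ)..1, Real.exp (2 * r ^ 2 * (h (ee t)).re)) := by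
  have c1 : Continuous fun t => F (ee t) := by simpa using cont_ee hR hF zero_le_one le_rfl
  have c2 : Continuous fun t => h (ee t) := by simpa using cont_ee hR hh zero_le_one le_rfl
  have c3 := cont_ee hR hF hr0.le hr1
  have c4 := cont_ee hR hh hr0.le hr1
  have d1 : Continuous fun t => (F (ee t)).re := Complex.continuous_re.comp c1
  have d2 : Continuous fun t => (h (ee t)).re := Complex.continuous_re.comp c2
  have d3 : Continuous fun t => (F (r * ee t)).re := Complex.continuous_re.comp c3
  have d4 : Continuous fun t => (h (r * ee t)).re := Complex.continuous_re.comp c4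
  have mem : ∀ r : ℝ, 0 ≤ r → r ≤ 1 → ∀ t, (r:ℂ) * ee t ∈ Metric.ball (0:ℂ) R := by
    intro r hr0 hr1 t
    have := norm_r_ee hr0 hr1 t
    simp only [Metric.mem_ball, dist_zero_right]; linarith
  have p1 : ∀ t, 0 < (F (ee t)).re := fun t => hpos _ (by simpa using mem 1 zero_le_one le_rfl t)
  have p3 : ∀ t, 0 < (F (r * ee t)).re := fun t => hpos _ (mem r hr0.le hr1 t)
  have i1 : ∫ t in (0:ℝ)..1, (F (ee t)).re = 1 := by
    rw [integral_re c1]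
    have := mean_value hR hF zero_le_one le_rfl
    simp only [Complex.ofReal_one, one_mul] at this
    rw [this, hF0]; simp
  have i3 : ∫ t in (0:ℝ)..1, (F (r * ee t)).re = 1 := by
    rw [integral_re c3, mean_value hR hF hr0.le hr1, hF0]; simp
  have hlog : ∀ t, (F (ee t)).re * Real.log (F (ee t)).re =
      2 * ((F (ee t)).re * (h (r * ee t)).re) - (F (ee t)).re * Real.log M := by
    intro t
    have := congrArg Real.log (hMF t)
    rw [Real.log_exp, Real.log_mul hM.ne' (p1 t).ne'] at this
    have e : Real.log (F (ee t)).re = 2 * (h (r * ee t)).re - Real.log M := by linarith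
    rw [e]; ring
  have hE : ∫ t in (0:ℝ)..1, (F (ee t)).re * Real.log (F (ee t)).re =
      2 * (∫ t in (0:ℝ)..1, (F (ee t)).re * (h (r * ee t)).re) - Real.log M := by
    simp only [hlog]
    rw [intervalIntegral.integral_sub (((d1.fun_mul d4).const_mul 2).intervalIntegrable _ _)
      ((d1.mul_const _).intervalIntegrable _ _), intervalIntegral.integral_const_mul,
      intervalIntegral.integral_mul_const, i1, one_mul]
  rw [selfadj_re hR hF hh hr0.le hr1] at hE
  have hs := sdpi hR hF hpos hF0 hr0.le hr1
  have hg := gibbs d3 p3 (d2.const_mul (2 * r ^ 2)) i3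
  have e : ∫ t in (0:ℝ)..1, (F (r * ee t)).re * (2 * r ^ 2 * (h (ee t)).re) =
      2 * r ^ 2 * ∫ t in (0:ℝ)..1, (F (r * ee t)).re * (h (ee t)).re := by
    rw [← intervalIntegral.integral_const_mul]
    congr 1; ext t; ring
  rw [e] at hg
  rw [hE] at hs
  nlinarith

lemma onevar_nonvan (N : ℕ) (c : ℕ → ℂ) (hc : ∀ z : ℂ, ‖z‖ ≤ 1 → ∑ k ∈ range N, c k * z ^ k ≠ 0)
    {r : ℝ} (hr0 : 0 < r) (hr1 : r ≤ 1) :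
    (∫ t in (0:ℝ)..1, ‖∑ k ∈ range N, c k * (r * ee t) ^ k‖ ^ 2) ^ (r ^ 2) ≤
      ∫ t in (0:ℝ)..1, ‖∑ k ∈ range N, c k * ee t ^ k‖ ^ (2 * r ^ 2) := by
  set f : ℂ → ℂ := fun z => ∑ k ∈ range N, c k * z ^ k with hf
  have hfd : Differentiable ℂ f := by
    refine Differentiable.fun_sum fun k _ => by fun_prop
  obtain ⟨R₁, hR₁, hne⟩ := ne_disc hfd.continuous hc
  obtain ⟨h, hh, hexp⟩ := exists_log (by linarith) hfd hne
  obtain ⟨F, hF, hF0, hFe⟩ := exists_F N (fun k => c k * (r:ℂ) ^ k)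
  have hFe' : ∀ t, (F (ee t)).re = ‖f (r * ee t)‖ ^ 2 := by
    intro t; rw [hFe t]; congr 2
    refine Finset.sum_congr rfl fun k _ => by rw [mul_pow]; ring
  have hFpos : ∀ t, 0 < (F (ee t)).re := by
    intro t; rw [hFe']
    have := norm_pos_iff.mpr (hc _ (norm_r_ee hr0.le hr1 t))
    positivity
  obtain ⟨R₂, hR₂, hpos⟩ := re_pos_disc hF hFpos
  set R := min R₁ R₂
  have hR : 1 < R := lt_min hR₁ hR₂
  set M := (F 0).re with hM
  have hM0 : 0 < M := hpos 0 (by simp; linarith)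
  have hFM : F 0 = (M:ℂ) := by
    apply Complex.ext <;> simp [hF0, hM]
  have hMI : ∫ t in (0:ℝ)..1, ‖f (r * ee t)‖ ^ 2 = M := by
    simp only [← hFe']
    rw [integral_re (φ := fun t => F (ee t)) (hF.continuous.comp continuous_ee)]
    have := mean_value hR (hF.differentiableOn) zero_le_one le_rfl
    simp only [Complex.ofReal_one, one_mul] at this
    rw [this]
  have mem : ∀ r : ℝ, 0 ≤ r → r ≤ 1 → ∀ t, (r:ℂ) * ee t ∈ Metric.ball (0:ℂ) R₁ := by
    intro r hr0 hr1 t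
    have := norm_r_ee hr0 hr1 t
    simp only [Metric.mem_ball, dist_zero_right]; linarith
  have hnorm : ∀ z ∈ Metric.ball (0:ℂ) R₁, ‖f z‖ = Real.exp (h z).re := by
    intro z hz; rw [← hexp z hz, Complex.norm_exp]
  have hre : ∀ z, (F z / M).re = (F z).re / M := fun z => Complex.div_ofReal_re _ _
  have := core hR (F := fun z => F z / M) (h := h) (hF.differentiableOn.div_const _)
    (fun z hz => by
      rw [hre]
      exact div_pos (hpos z (Metric.ball_subset_ball (min_le_right _ _) hz)) hM0)
    (by rw [hFM]; exact div_self (by exact_mod_cast hM0.ne'))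
    (hh.mono (Metric.ball_subset_ball (min_le_left _ _))) hr0 hr1 hM0
    (fun t => by
      rw [hre, mul_div_cancel₀ _ hM0.ne', hFe', hnorm _ (mem r hr0.le hr1 t), ← Real.exp_nat_mul]
      norm_num)
  have e : ∀ t, Real.exp (2 * r ^ 2 * (h (ee t)).re) = ‖f (ee t)‖ ^ (2 * r ^ 2) := by
    intro t
    rw [hnorm _ (by simpa using mem 1 zero_le_one le_rfl t), ← Real.exp_mul]
    ring_nf
  simp only [e] at this
  rw [hMI]
  have hc : Continuous fun t => ‖f (ee t)‖ ^ (2 * r ^ 2) :=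
    (hfd.continuous.comp continuous_ee).norm.rpow_const fun t => Or.inr (by positivity)
  have hZ : 0 < ∫ t in (0:ℝ)..1, ‖f (ee t)‖ ^ (2 * r ^ 2) := by
    apply intervalIntegral.intervalIntegral_pos_of_pos (hc.intervalIntegrable _ _) _ zero_lt_one
    intro t; rw [← e]; exact Real.exp_pos _
  rw [← Real.log_rpow hM0, Real.log_le_log_iff (by positivity) hZ] at this
  exact this

end Bayart

namespace Bayart
open Polynomial in
lemma exists_outer (S : Multiset ℂ) : ∃ q : ℂ[X], (∀ z : ℂ, ‖z‖ < 1 → q.eval z ≠ 0) ∧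
    (∀ z : ℂ, ‖z‖ = 1 → ‖q.eval z‖ = ‖((S.map fun a => X - C a).prod).eval z‖) ∧
    (∀ z : ℂ, ‖z‖ ≤ 1 → ‖((S.map fun a => X - C a).prod).eval z‖ ≤ ‖q.eval z‖) := by
  induction S using Multiset.induction_on with
  | empty => exact ⟨1, by simp, by simp, by simp⟩
  | cons a S ih =>
    obtain ⟨q, h1, h2, h3⟩ := ih
    by_cases ha : ‖a‖ < 1
    · have key : ∀ z : ℂ, ‖1 - (starRingEnd ℂ) a * z‖ ^ 2 - ‖z - a‖ ^ 2 = (1 - ‖z‖ ^ 2) * (1 - ‖a‖ ^ 2) := by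
        intro z
        simp only [← Complex.normSq_eq_norm_sq, Complex.normSq_apply]
        simp; ring
      refine ⟨(1 - C ((starRingEnd ℂ) a) * X) * q, ?_, ?_, ?_⟩
      · intro z hz
        simp only [eval_mul, eval_sub, eval_one, eval_C, eval_X]
        refine mul_ne_zero (fun h => ?_) (h1 z hz)
        have h4 : (starRingEnd ℂ) a * z = 1 := (sub_eq_zero.mp h).symm
        have h5 := congrArg norm h4
        rw [norm_mul, RCLike.norm_conj, norm_one] at h5
        nlinarith [norm_nonneg a, norm_nonneg z]
      · intro z hz
        simp only [Multiset.map_cons, Multiset.prod_cons, eval_mul, eval_sub, eval_one, eval_C, eval_X, norm_mul]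
        rw [h2 z hz]
        congr 1
        have := key z
        rw [hz] at this
        have h6 : ‖1 - (starRingEnd ℂ) a * z‖ ^ 2 = ‖z - a‖ ^ 2 := by linarith
        exact (pow_left_inj₀ (norm_nonneg _) (norm_nonneg _) two_ne_zero).mp h6
      · intro z hz
        simp only [Multiset.map_cons, Multiset.prod_cons, eval_mul, eval_sub, eval_one, eval_C, eval_X, norm_mul]
        refine mul_le_mul ?_ (h3 z hz) (norm_nonneg _) (norm_nonneg _)
        have := key z
        have h7 : 0 ≤ (1 - ‖z‖ ^ 2) * (1 - ‖a‖ ^ 2) := by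
          apply mul_nonneg <;> nlinarith [norm_nonneg a, norm_nonneg z]
        exact (pow_le_pow_iff_left₀ (norm_nonneg _) (norm_nonneg _) two_ne_zero).mp (by linarith)
    · refine ⟨(X - C a) * q, ?_, ?_, ?_⟩
      · intro z hz
        simp only [eval_mul, eval_sub, eval_C, eval_X]
        refine mul_ne_zero (fun h => ha ?_) (h1 z hz)
        rw [← sub_eq_zero.mp h]; exact hz
      · intro z hz
        simp only [Multiset.map_cons, Multiset.prod_cons, eval_mul, norm_mul]
        rw [h2 z hz]
      · intro z hz
        simp only [Multiset.map_cons, Multiset.prod_cons, eval_mul, norm_mul]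
        exact mul_le_mul_of_nonneg_left (h3 z hz) (norm_nonneg _)

open Polynomial in
lemma onevar_open (p : ℂ[X]) (hp : ∀ z : ℂ, ‖z‖ < 1 → p.eval z ≠ 0) {r : ℝ} (hr0 : 0 < r) (hr1 : r ≤ 1) :
    (∫ t in (0:ℝ)..1, ‖p.eval (r * ee t)‖ ^ 2) ^ (r ^ 2) ≤
      ∫ t in (0:ℝ)..1, ‖p.eval (ee t)‖ ^ (2 * r ^ 2) := by
  have hce := continuous_ee
  have c1 : Continuous fun η : ℝ => (∫ t in (0:ℝ)..1, ‖p.eval ((η:ℂ) * (r * ee t))‖ ^ 2) ^ (r ^ 2) := by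
    refine Continuous.rpow_const ?_ fun _ => Or.inr (by positivity)
    apply intervalIntegral.continuous_parametric_intervalIntegral_of_continuous'
    unfold Function.uncurry
    fun_prop
  have c2 : Continuous fun η : ℝ => ∫ t in (0:ℝ)..1, ‖p.eval ((η:ℂ) * ee t)‖ ^ (2 * r ^ 2) := by
    apply intervalIntegral.continuous_parametric_intervalIntegral_of_continuous'
    unfold Function.uncurry
    refine Continuous.rpow_const ?_ fun _ => Or.inr (by positivity)
    fun_prop
  have hle : ∀ᶠ η : ℝ in nhdsWithin 1 (Set.Iio 1),
      (∫ t in (0:ℝ)..1, ‖p.eval ((η:ℂ) * (r * ee t))‖ ^ 2) ^ (r ^ 2) ≤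
      ∫ t in (0:ℝ)..1, ‖p.eval ((η:ℂ) * ee t)‖ ^ (2 * r ^ 2) := by
    have : Set.Ioo (0:ℝ) 1 ∈ nhdsWithin (1:ℝ) (Set.Iio 1) := Ioo_mem_nhdsLT zero_lt_one
    filter_upwards [this] with η hη
    have e : ∀ z : ℂ, ∑ k ∈ range (p.natDegree + 1), (p.coeff k * (η:ℂ) ^ k) * z ^ k
        = p.eval ((η:ℂ) * z) := by
      intro z
      rw [eval_eq_sum_range]
      refine Finset.sum_congr rfl fun k _ => by rw [mul_pow]; ring
    have := onevar_nonvan (p.natDegree + 1) (fun k => p.coeff k * (η:ℂ) ^ k) (fun z hz => by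
      rw [e]
      apply hp
      rw [norm_mul, Complex.norm_real, Real.norm_of_nonneg hη.1.le]
      nlinarith [hη.1, hη.2, norm_nonneg z]) hr0 hr1
    simp only [e] at this
    exact this
  have := le_of_tendsto_of_tendsto ((c1.tendsto 1).mono_left nhdsWithin_le_nhds)
    ((c2.tendsto 1).mono_left nhdsWithin_le_nhds) hle
  simpa using this

open Polynomial in
lemma onevar_poly (p : ℂ[X]) {r : ℝ} (hr0 : 0 < r) (hr1 : r ≤ 1) :
    (∫ t in (0:ℝ)..1, ‖p.eval (r * ee t)‖ ^ 2) ^ (r ^ 2) ≤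
      ∫ t in (0:ℝ)..1, ‖p.eval (ee t)‖ ^ (2 * r ^ 2) := by
  have hce := continuous_ee
  have hr2 : 0 < r ^ 2 := by positivity
  by_cases hp : p = 0
  · subst hp; simp [Real.zero_rpow hr2.ne', hr0.ne']
  obtain ⟨q, h1, h2, h3⟩ := exists_outer p.roots
  have hl : p.leadingCoeff ≠ 0 := by simpa using hp
  have hfac : ∀ z, p.eval z = p.leadingCoeff * ((p.roots.map fun a => X - C a).prod).eval z := by
    intro z
    conv_lhs => rw [(IsAlgClosed.splits p).eq_prod_roots]
    rw [eval_mul, eval_C]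
  have := onevar_open (C p.leadingCoeff * q) (fun z hz => by
    rw [eval_mul, eval_C]; exact mul_ne_zero hl (h1 z hz)) hr0 hr1
  have e : ∀ t, ‖(C p.leadingCoeff * q).eval (ee t)‖ = ‖p.eval (ee t)‖ := by
    intro t
    rw [hfac, eval_mul, eval_C, norm_mul, norm_mul, h2 _ (norm_ee t)]
  simp only [e] at this
  refine le_trans ?_ this
  apply Real.rpow_le_rpow _ _ hr2.le
  · exact intervalIntegral.integral_nonneg zero_le_one fun t _ => by positivity
  · refine intervalIntegral.integral_mono_on zero_le_one (Continuous.intervalIntegrable (by fun_prop) _ _)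
      (Continuous.intervalIntegrable (by fun_prop) _ _) fun t _ => ?_
    rw [hfac, eval_mul, eval_C, norm_mul, norm_mul]
    gcongr
    exact h3 _ (norm_r_ee hr0.le hr1 t)

lemma parseval_fin {N : ℕ} (a : Fin N → ℂ) :
    ∫ t in (0:ℝ)..1, ‖∑ k, a k * ee t ^ (k:ℕ)‖ ^ 2 = ∑ k, ‖a k‖ ^ 2 := by
  have hce := continuous_ee
  have hcc : Continuous fun t => (starRingEnd ℂ) (ee t) := Complex.continuous_conj.comp hce
  have h1 : ∀ t, ((‖∑ k, a k * ee t ^ (k:ℕ)‖ ^ 2 : ℝ) : ℂ) =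
      ∑ j, ∑ k, a j * (starRingEnd ℂ) (a k) * ((starRingEnd ℂ) (ee t) ^ (k:ℕ) * ee t ^ (j:ℕ)) := by
    intro t
    rw [← Complex.normSq_eq_norm_sq, ← Complex.mul_conj, map_sum, Finset.sum_mul_sum]
    refine Finset.sum_congr rfl fun j _ => Finset.sum_congr rfl fun k _ => ?_
    rw [map_mul, map_pow]; ring
  have h2 : ((∫ t in (0:ℝ)..1, ‖∑ k, a k * ee t ^ (k:ℕ)‖ ^ 2 : ℝ) : ℂ) = ((∑ k, ‖a k‖ ^ 2 : ℝ) : ℂ) := by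
    rw [← intervalIntegral.integral_ofReal]
    simp only [h1]
    rw [intervalIntegral.integral_finsetSum fun j _ => Continuous.intervalIntegrable (by fun_prop) _ _]
    push_cast
    refine Finset.sum_congr rfl fun j _ => ?_
    rw [intervalIntegral.integral_finsetSum fun j _ => Continuous.intervalIntegrable (by fun_prop) _ _]
    rw [Finset.sum_eq_single j]
    · rw [intervalIntegral.integral_const_mul, int_ee_pow, if_pos rfl, mul_one, Complex.mul_conj,
        Complex.normSq_eq_norm_sq]; simp
    · intro k _ hk
      rw [intervalIntegral.integral_const_mul, int_ee_pow, if_neg, mul_zero]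
      intro h; exact hk (Fin.ext h.symm)
    · simp
  exact_mod_cast h2

open Polynomial in
lemma onevar {N : ℕ} (a : Fin N → ℂ) {s : ℝ} (hs0 : 0 < s) (hs2 : s ≤ 2) :
    (∑ k : Fin N, (s / 2) ^ (k:ℕ) * ‖a k‖ ^ 2) ^ (s / 2) ≤
      ∫ t in (0:ℝ)..1, ‖∑ k, a k * ee t ^ (k:ℕ)‖ ^ s := by
  set r := Real.sqrt (s / 2) with hr
  have hrs : r ^ 2 = s / 2 := Real.sq_sqrt (by positivity)
  have hr0 : 0 < r := Real.sqrt_pos.mpr (by positivity)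
  have hr1 : r ≤ 1 := by
    exact Real.sqrt_le_iff.mpr ⟨by norm_num, by linarith⟩
  set p : ℂ[X] := ∑ k, C (a k) * X ^ (k:ℕ) with hp
  have he : ∀ z, p.eval z = ∑ k, a k * z ^ (k:ℕ) := by
    intro z; simp [hp, eval_finsetSum]
  have := onevar_poly p hr0 hr1
  have e2 : ∀ t, ∑ k, a k * ((r:ℂ) * ee t) ^ (k:ℕ) = ∑ k, (a k * (r:ℂ) ^ (k:ℕ)) * ee t ^ (k:ℕ) := by
    intro t
    refine Finset.sum_congr rfl fun k _ => by rw [mul_pow]; ring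
  simp only [he, e2] at this
  rw [parseval_fin] at this
  rw [hrs] at this
  have e3 : ∀ k : Fin N, ‖a k * (r:ℂ) ^ (k:ℕ)‖ ^ 2 = (s / 2) ^ (k:ℕ) * ‖a k‖ ^ 2 := by
    intro k
    rw [norm_mul, norm_pow, Complex.norm_real, Real.norm_of_nonneg hr0.le, mul_pow, ← pow_mul,
      mul_comm (k:ℕ) 2, pow_mul, hrs]; ring
  simp only [e3] at this
  have e4 : 2 * (s / 2) = s := by ring
  rw [e4] at this
  exact this

end Bayart

namespace Bayart

lemma minkowski {X : Type*} [MeasurableSpace X] (μ : Measure X) {N : ℕ} (g : Fin N → X → ℝ)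
    (hg : ∀ k, Integrable (g k) μ) (hg0 : ∀ k x, 0 ≤ g k x) {p : ℝ} (hp : 1 ≤ p) :
    (∑ k, (∫ x, g k x ∂μ) ^ p) ^ (1 / p) ≤ ∫ x, (∑ k, (g k x) ^ p) ^ (1 / p) ∂μ := by
  have : Fact (1 ≤ ENNReal.ofReal p) := ⟨by simpa using hp⟩
  have hp0 : 0 < p := by linarith
  have hpr : (ENNReal.ofReal p).toReal = p := ENNReal.toReal_ofReal hp0.le
  have hn : ∀ v : PiLp (ENNReal.ofReal p) (fun _ : Fin N => ℝ), (∀ k, 0 ≤ v k) →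
      ‖v‖ = (∑ k, (v k) ^ p) ^ (1 / p) := by
    intro v hv
    rw [PiLp.norm_eq_sum (by rw [hpr]; exact hp0), hpr]
    simp only [Real.norm_of_nonneg (hv _)]
  have h := norm_integral_le_integral_norm (μ := μ)
    (fun x => (WithLp.toLp (ENNReal.ofReal p) (fun k => g k x) : PiLp (ENNReal.ofReal p) (fun _ : Fin N => ℝ)))
  have he : ∀ k, (∫ x, (WithLp.toLp (ENNReal.ofReal p) (fun k => g k x) :
      PiLp (ENNReal.ofReal p) (fun _ : Fin N => ℝ)) ∂μ) k = ∫ x, g k x ∂μ := by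
    intro k
    rw [eval_integral_piLp (fun i => hg i)]
  rw [hn] at h
  · simp only [he] at h
    refine h.trans (le_of_eq ?_)
    refine integral_congr_ae (Filter.Eventually.of_forall fun x => ?_)
    simp only
    rw [hn _ (fun k => hg0 k x)]
  · intro k; rw [he]; exact integral_nonneg (hg0 k)

noncomputable def nu : Measure ℝ := volume.restrict (Set.Icc 0 1)

instance : IsFiniteMeasure nu := by unfold nu; infer_instance

lemma int_nu (φ : ℝ → ℝ) : ∫ t in (0:ℝ)..1, φ t = ∫ t, φ t ∂nu := by
  rw [intervalIntegral.integral_of_le zero_le_one, ← integral_Icc_eq_integral_Ioc]; rfl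

noncomputable def PP {n N : ℕ} (a : (Fin n → Fin N) → ℂ) (t : Fin n → ℝ) : ℂ :=
  ∑ α, a α * ∏ i, ee (t i) ^ (α i : ℕ)

lemma cont_PP {n N : ℕ} (a : (Fin n → Fin N) → ℂ) : Continuous (PP a) := by
  have := continuous_ee
  unfold PP; fun_prop

lemma norm_PP_le {n N : ℕ} (a : (Fin n → Fin N) → ℂ) (t : Fin n → ℝ) : ‖PP a t‖ ≤ ∑ α, ‖a α‖ := by
  unfold PP
  refine (norm_sum_le _ _).trans (Finset.sum_le_sum fun α _ => ?_)
  rw [norm_mul, norm_prod]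
  simp [norm_ee]

lemma PP_cons {n N : ℕ} (a : (Fin (n + 1) → Fin N) → ℂ) (x : ℝ) (t : Fin n → ℝ) :
    PP a (Fin.cons x t) = ∑ k, PP (fun β => a (Fin.cons k β)) t * ee x ^ (k:ℕ) := by
  unfold PP
  rw [← (Fin.consEquiv fun _ => Fin N).sum_comp, Fintype.sum_prod_type]
  refine Finset.sum_congr rfl fun k _ => ?_
  rw [Finset.sum_mul]
  refine Finset.sum_congr rfl fun β _ => ?_
  simp only [Fin.consEquiv, Equiv.coe_fn_mk, Fin.prod_univ_succ, Fin.cons_zero, Fin.cons_succ]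
  ring

lemma integrable_bdd {X : Type*} [MeasurableSpace X] [TopologicalSpace X] [OpensMeasurableSpace X]
    {μ : Measure X} [IsFiniteMeasure μ] {φ : X → ℝ} (hφ : Continuous φ) {C : ℝ}
    (h0 : ∀ x, 0 ≤ φ x) (h : ∀ x, φ x ≤ C) : Integrable φ μ :=
  Integrable.of_bound hφ.aestronglyMeasurable C
    (Filter.Eventually.of_forall fun x => by rw [Real.norm_of_nonneg (h0 x)]; exact h x)

lemma tensor {s : ℝ} (hs1 : 1 ≤ s) (hs2 : s ≤ 2) (N : ℕ) : ∀ (n : ℕ) (a : (Fin n → Fin N) → ℂ),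
    (∑ α, (s / 2) ^ (∑ i, (α i : ℕ)) * ‖a α‖ ^ 2) ^ (s / 2) ≤
      ∫ t, ‖PP a t‖ ^ s ∂(Measure.pi fun _ : Fin n => nu) := by
  have hs0 : 0 < s := by linarith
  intro n
  induction n with
  | zero =>
    intro a
    rw [Measure.pi_of_empty, integral_dirac]
    unfold PP
    simp only [Finset.univ_unique, Finset.sum_singleton, Finset.univ_eq_empty, Finset.sum_empty,
      Finset.prod_empty, pow_zero, one_mul, mul_one]
    rw [← Real.rpow_natCast, ← Real.rpow_mul (norm_nonneg _)]
    apply le_of_eq; congr 1; push_cast; ring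
  | succ n ih =>
    intro a
    set μ := Measure.pi fun _ : Fin n => nu with hμ
    set b : Fin N → (Fin n → Fin N) → ℂ := fun k β => a (Fin.cons k β) with hb
    have hp : 1 ≤ 2 / s := by rw [le_div_iff₀ hs0]; linarith
    have hcons : Continuous fun z : ℝ × (Fin n → ℝ) => (Fin.cons z.1 z.2 : Fin (n + 1) → ℝ) := by
      refine continuous_pi fun i => ?_
      refine Fin.cases ?_ (fun j => ?_) i
      · simpa using continuous_fst
      · simp only [Fin.cons_succ]; fun_prop
    have e1 : ∫ t, ‖PP a t‖ ^ s ∂(Measure.pi fun _ : Fin (n + 1) => nu) =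
        ∫ z, ‖PP a (Fin.cons z.1 z.2)‖ ^ s ∂(nu.prod μ) := by
      rw [← ((measurePreserving_piFinSuccAbove (fun _ : Fin (n + 1) => nu) 0).symm).integral_comp']
      simp only [MeasurableEquiv.piFinSuccAbove_symm_apply, Fin.insertNthEquiv, Equiv.coe_fn_mk,
        Fin.insertNth_zero]
      rfl
    have hInt : Integrable (fun z : ℝ × (Fin n → ℝ) => ‖PP a (Fin.cons z.1 z.2)‖ ^ s) (nu.prod μ) := by
      refine integrable_bdd (C := (∑ α, ‖a α‖) ^ s) ?_ (fun z => by positivity) (fun z => ?_)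
      · exact (((cont_PP a).comp hcons).norm).rpow_const fun _ => Or.inr hs0.le
      · exact Real.rpow_le_rpow (norm_nonneg _) (norm_PP_le _ _) hs0.le
    rw [e1, integral_prod_symm _ hInt]
    have hcS : Continuous fun t => (∑ k : Fin N, (s / 2) ^ (k:ℕ) * ‖PP (b k) t‖ ^ 2) ^ (s / 2) := by
      refine Continuous.rpow_const ?_ fun _ => Or.inr (by positivity)
      refine continuous_finsetSum _ fun k _ => ?_
      exact ((cont_PP (b k)).norm.pow 2).const_mul _
    have step1 : ∫ t, (∑ k : Fin N, (s / 2) ^ (k:ℕ) * ‖PP (b k) t‖ ^ 2) ^ (s / 2) ∂μ ≤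
        ∫ t, ∫ x, ‖PP a (Fin.cons x t)‖ ^ s ∂nu ∂μ := by
      refine integral_mono ?_ hInt.integral_prod_right fun t => ?_
      · refine integrable_bdd (C := (∑ k : Fin N, (s / 2) ^ (k:ℕ) * (∑ α, ‖b k α‖) ^ 2) ^ (s / 2)) hcS
          (fun z => by positivity) (fun z => ?_)
        refine Real.rpow_le_rpow (by positivity) ?_ (by positivity)
        refine Finset.sum_le_sum fun k _ => ?_
        gcongr
        exact norm_PP_le _ _
      · simp only [PP_cons]
        rw [← int_nu]
        exact onevar (fun k => PP (b k) t) hs0 hs2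
    refine le_trans ?_ step1
    set g : Fin N → (Fin n → ℝ) → ℝ := fun k t => ((s / 2) ^ (k:ℕ)) ^ (s / 2) * ‖PP (b k) t‖ ^ s with hg
    have hg0 : ∀ k t, 0 ≤ g k t := fun k t => by simp only [hg]; positivity
    have hgi : ∀ k, Integrable (g k) μ := by
      intro k
      refine Integrable.const_mul ?_ _
      refine integrable_bdd (C := (∑ α, ‖b k α‖) ^ s) ?_ (fun z => by positivity) (fun z => ?_)
      · exact (cont_PP _).norm.rpow_const fun _ => Or.inr hs0.le
      · exact Real.rpow_le_rpow (norm_nonneg _) (norm_PP_le _ _) hs0.le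
    have hss : s / 2 * (2 / s) = 1 := by field_simp
    have hss' : s * (2 / s) = 2 := by field_simp
    have hgp : ∀ k t, g k t ^ (2 / s) = (s / 2) ^ (k:ℕ) * ‖PP (b k) t‖ ^ 2 := by
      intro k t
      simp only [hg]
      rw [Real.mul_rpow (by positivity) (by positivity), ← Real.rpow_mul (by positivity),
        ← Real.rpow_mul (by positivity), hss, hss', Real.rpow_one, Real.rpow_two]
    have hm := minkowski μ g hgi hg0 hp
    simp only [hgp, one_div_div] at hm
    refine le_trans ?_ hm
    refine Real.rpow_le_rpow (by positivity) ?_ (by positivity)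
    rw [← (Fin.consEquiv fun _ => Fin N).sum_comp, Fintype.sum_prod_type]
    refine Finset.sum_le_sum fun k _ => ?_
    have hk := ih (b k)
    have e2 : ∫ t, g k t ∂μ = ((s / 2) ^ (k:ℕ)) ^ (s / 2) * ∫ t, ‖PP (b k) t‖ ^ s ∂μ :=
      integral_const_mul _ _
    rw [e2, Real.mul_rpow (by positivity) (integral_nonneg fun t => by positivity),
      ← Real.rpow_mul (by positivity), hss, Real.rpow_one]
    have h3 := Real.rpow_le_rpow (by positivity) hk (by positivity : 0 ≤ 2 / s)
    rw [← Real.rpow_mul (by positivity), hss, Real.rpow_one] at h3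
    refine le_trans (le_of_eq ?_) (mul_le_mul_of_nonneg_left h3 (by positivity))
    rw [Finset.mul_sum]
    refine Finset.sum_congr rfl fun β _ => ?_
    simp only [Fin.consEquiv, Equiv.coe_fn_mk, Fin.sum_univ_succ, Fin.cons_zero, Fin.cons_succ, pow_add]
    simp only [hb]; ring

lemma sum_anti {M : Type*} [AddCommMonoid M] (n m : ℕ) (φ : (Fin n → ℕ) → M) :
    ∑ α ∈ Finset.Nat.antidiagonalTuple n m, φ α =
      ∑ β : Fin n → Fin (m + 1), if ∑ i, (β i : ℕ) = m then φ (fun i => (β i : ℕ)) else 0 := by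
  rw [← Finset.sum_filter]
  symm
  have key : ∀ α ∈ Finset.Nat.antidiagonalTuple n m, ∀ i, α i % (m + 1) = α i := by
    intro α hα i
    rw [Finset.Nat.mem_antidiagonalTuple] at hα
    apply Nat.mod_eq_of_lt
    have := Finset.single_le_sum (f := α) (fun i _ => Nat.zero_le _) (Finset.mem_univ i)
    omega
  refine Finset.sum_nbij' (fun β i => (β i : ℕ)) (fun α i => Fin.ofNat (m + 1) (α i)) ?_ ?_ ?_ ?_ ?_
  · intro β hβ
    rw [Finset.Nat.mem_antidiagonalTuple]
    simpa using hβ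
  · intro α hα
    have h1 := key α hα
    rw [Finset.Nat.mem_antidiagonalTuple] at hα
    simp [h1, hα]
  · intro β _
    ext i
    simp [Nat.mod_eq_of_lt (β i).2]
  · intro α hα
    ext i
    simp [key α hα i]
  · intro β _; rfl

end Bayart

theorem bayart_inequality (m n : ℕ) (hm : 0 < m) (hn : 0 < n)
    (s : ℝ) (hs1 : 1 ≤ s) (hs2 : s ≤ 2) (a : (Fin n → ℕ) → ℂ) :
    (∑ α ∈ Finset.Nat.antidiagonalTuple n m, ‖a α‖ ^ (2 : ℝ)) ^ ((1 : ℝ) / 2) ≤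
      (2 / s) ^ ((m : ℝ) / 2) *
        (∫ t : Fin n → ℝ in Set.univ.pi fun _ : Fin n => Set.Icc (0 : ℝ) 1,
          ‖∑ α ∈ Finset.Nat.antidiagonalTuple n m,
            a α * ∏ i, Complex.exp (((2 * Real.pi * t i : ℝ) : ℂ) * Complex.I) ^ α i‖ ^ s)
          ^ (1 / s) := by
  have hs0 : 0 < s := by linarith
  set b : (Fin n → Fin (m + 1)) → ℂ := fun β =>
    if ∑ i, (β i : ℕ) = m then a (fun i => (β i : ℕ)) else 0 with hb
  have hPP : ∀ t : Fin n → ℝ, ∑ α ∈ Finset.Nat.antidiagonalTuple n m,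
      a α * ∏ i, Complex.exp (((2 * Real.pi * t i : ℝ) : ℂ) * Complex.I) ^ α i = Bayart.PP b t := by
    intro t
    rw [Bayart.sum_anti]
    unfold Bayart.PP Bayart.ee
    refine Finset.sum_congr rfl fun β _ => ?_
    simp only [hb]
    split_ifs <;> simp
  have hμ : (volume : Measure (Fin n → ℝ)).restrict (Set.univ.pi fun _ : Fin n => Set.Icc (0 : ℝ) 1)
      = Measure.pi fun _ : Fin n => Bayart.nu := by
    rw [volume_pi, Measure.restrict_pi_pi]; rfl
  simp only [hPP]
  rw [hμ]
  have key := Bayart.tensor hs1 hs2 (m + 1) n b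
  set I := ∫ t, ‖Bayart.PP b t‖ ^ s ∂(Measure.pi fun _ : Fin n => Bayart.nu) with hI
  set S := ∑ α ∈ Finset.Nat.antidiagonalTuple n m, ‖a α‖ ^ (2 : ℝ) with hS
  have hS0 : 0 ≤ S := Finset.sum_nonneg fun α _ => by positivity
  have hI0 : 0 ≤ I := integral_nonneg fun t => by positivity
  have e : ∑ β : Fin n → Fin (m + 1), (s / 2) ^ (∑ i, (β i : ℕ)) * ‖b β‖ ^ 2 = (s / 2) ^ m * S := by
    rw [hS, Bayart.sum_anti, Finset.mul_sum]
    refine Finset.sum_congr rfl fun β _ => ?_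
    simp only [hb]
    split_ifs with h
    · rw [h, Real.rpow_two]
    · simp
  rw [e] at key
  have h1 := Real.rpow_le_rpow (by positivity) key (by positivity : 0 ≤ 1 / s)
  have e2 : s / 2 * (1 / s) = 1 / 2 := by field_simp
  rw [← Real.rpow_mul (by positivity), e2, Real.mul_rpow (by positivity) hS0,
    ← Real.rpow_natCast, ← Real.rpow_mul (by positivity)] at h1
  have e3 : (m:ℝ) * (1 / 2) = m / 2 := by ring
  rw [e3] at h1
  have e4 : (2 / s) ^ ((m:ℝ) / 2) * (s / 2) ^ ((m:ℝ) / 2) = 1 := by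
    rw [← Real.mul_rpow (by positivity) (by positivity)]
    have : 2 / s * (s / 2) = 1 := by field_simp
    rw [this, Real.one_rpow]
  calc S ^ ((1:ℝ) / 2) = (2 / s) ^ ((m:ℝ) / 2) * ((s / 2) ^ ((m:ℝ) / 2) * S ^ ((1:ℝ) / 2)) := by
        rw [← mul_assoc, e4, one_mul]
    _ ≤ _ := mul_le_mul_of_nonneg_left h1 (by positivity)
end

section
/- Let X be a complex normed linear space, let P be a continuous m-homogeneous polynomial on X with polar L (the unique symmetric continuous m-linear form with L(x,…,x) = P(x)). Then for any nonnegative integers m_1,…,m_k with m_1 + ⋯ + m_k = m and any unit vectors x^{(1)},…,x^{(k)} ∈ X, |L(x^{(1)},…,x^{(1)},…,x^{(k)},…,x^{(k)})| ≤ (m_1!⋯m_k! · m^m)/(m_1^{m_1}⋯m_k^{m_k} · m!) · ‖P‖, where x^{(j)} appears m_j times and ‖P‖ := sup{|P(x)| : ‖x‖ ≤ 1}. -/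
open Finset Nat

lemma exists_perm_of_fibers {m k : ℕ} (f g : Fin m → Fin k)
    (h : ∀ j, (Finset.univ.filter fun i => g i = j).card =
      (Finset.univ.filter fun i => f i = j).card) :
    ∃ τ : Equiv.Perm (Fin m), ∀ i, f (τ i) = g i := by
  have e : ∀ j, Nonempty ({i // g i = j} ≃ {i // f i = j}) := fun j => by
    apply Fintype.card_eq.1
    rw [Fintype.card_subtype, Fintype.card_subtype]
    exact h j
  exact ⟨Equiv.ofFiberEquiv fun j => (e j).some, fun i => Equiv.ofFiberEquiv_map _ i⟩

lemma card_fibers {m k : ℕ} (v : Fin k → ℕ) (f : Fin m → Fin k)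
    (hf : ∀ j, (Finset.univ.filter fun i => f i = j).card = v j) :
    (Finset.univ.filter fun g : Fin m → Fin k =>
      ∀ j, (Finset.univ.filter fun i => g i = j).card = v j).card * ∏ j, (v j)! = m ! := by
  set S := Finset.univ.filter fun g : Fin m → Fin k =>
      ∀ j, (Finset.univ.filter fun i => g i = j).card = v j with hS
  have h1 : (Finset.univ : Finset (Equiv.Perm (Fin m))).card = m ! := by
    rw [Finset.card_univ, Fintype.card_perm, Fintype.card_fin]
  rw [← h1, Finset.card_eq_sum_card_fiberwise (f := fun σ : Equiv.Perm (Fin m) => f ∘ σ) (t := S)]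
  · rw [Finset.sum_const_nat (m := ∏ j, (v j)!)]
    intro g hg
    simp only [hS, Finset.mem_filter, Finset.mem_univ, true_and] at hg
    obtain ⟨τ, hτ⟩ := exists_perm_of_fibers f g (fun j => by rw [hg, hf])
    have h2 := DomMulAct.stabilizer_card f
    simp only [Fintype.card_subtype, hf] at h2
    rw [← h2]
    refine Finset.card_bij (fun σ _ => σ * τ⁻¹) ?_ ?_ ?_
    · intro σ hσ
      simp only [Finset.mem_filter, Finset.mem_univ, true_and] at hσ ⊢
      funext i
      have := congrFun hσ (τ⁻¹ i)
      simp only [Function.comp_apply] at this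
      rw [← hτ] at this
      simpa using this
    · intro a _ b _ hab
      exact mul_right_cancel hab
    · intro σ hσ
      simp only [Finset.mem_filter, Finset.mem_univ, true_and] at hσ
      refine ⟨σ * τ, ?_, by simp⟩
      simp only [Finset.mem_filter, Finset.mem_univ, true_and]
      funext i
      have := congrFun hσ (τ i)
      simp only [Function.comp_apply] at this
      simp [this, hτ]
  · intro σ _
    simp only [hS, Finset.coe_filter, Finset.mem_univ, true_and, Set.mem_ofPred_eq]
    intro j
    rw [← hf j]
    refine Finset.card_bij (fun i _ => σ i) ?_ ?_ ?_
    · intro i hi; simpa using hi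
    · intro a _ b _ hab; exact σ.injective hab
    · intro b hb; exact ⟨σ⁻¹ b, by simpa using hb, by simp⟩

lemma root_sum {N : ℕ} {w : ℂ} (hw : IsPrimitiveRoot w N) (hN : 0 < N) {c d : ℕ}
    (hc : c < N) (hd : d < N) :
    ∑ a : Fin N, ((w ^ (a : ℕ)) ^ d)⁻¹ * (w ^ (a : ℕ)) ^ c = if c = d then (N : ℂ) else 0 := by
  have hw0 : w ≠ 0 := hw.ne_zero hN.ne'
  split_ifs with h
  · subst h
    rw [Finset.sum_congr rfl (fun a _ => inv_mul_cancel₀ (pow_ne_zero _ (pow_ne_zero _ hw0)))]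
    simp
  · have hz : (w ^ d)⁻¹ * w ^ c ≠ 1 := by
      intro h'
      apply h
      apply hw.pow_inj hc hd
      field_simp at h'
      exact h'
    have : ∀ a : Fin N, ((w ^ (a : ℕ)) ^ d)⁻¹ * (w ^ (a : ℕ)) ^ c
        = ((w ^ d)⁻¹ * w ^ c) ^ (a : ℕ) := by
      intro a
      rw [mul_pow, inv_pow, ← pow_mul, ← pow_mul, ← pow_mul, ← pow_mul, mul_comm d, mul_comm c]
    simp_rw [this]
    rw [Fin.sum_univ_eq_sum_range (fun a => ((w ^ d)⁻¹ * w ^ c) ^ a), geom_sum_eq hz]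
    rw [mul_pow, inv_pow, ← pow_mul, ← pow_mul, mul_comm d, mul_comm c, pow_mul, pow_mul,
      hw.pow_eq_one]
    simp

lemma prod_fib {m k : ℕ} (g : Fin m → Fin k) (h : Fin k → ℂ) :
    ∏ i, h (g i) = ∏ j, h j ^ (Finset.univ.filter fun i => g i = j).card := by
  rw [← Finset.prod_fiberwise' Finset.univ g h]
  simp

lemma averaging {X : Type*} [NormedAddCommGroup X] [NormedSpace ℂ X]
    (m : ℕ) (L : ContinuousMultilinearMap ℂ (fun _ : Fin m => X) ℂ)
    (hsym : ∀ (σ : Equiv.Perm (Fin m)) (x : Fin m → X), L (fun i => x (σ i)) = L x)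
    (k : ℕ) (v : Fin k → ℕ) (x : Fin k → X) (t : Fin k → ℂ)
    (f : Fin m → Fin k) (hf : ∀ j, (Finset.univ.filter fun i => f i = j).card = v j)
    (w : ℂ) (hw : IsPrimitiveRoot w (m + 1)) :
    ∑ a : Fin k → Fin (m + 1), (∏ j, ((w ^ (a j : ℕ)) ^ v j)⁻¹) *
      L (fun _ => ∑ j, (t j * w ^ (a j : ℕ)) • x j) =
    ((m + 1 : ℕ) : ℂ) ^ k * (Finset.univ.filter fun g : Fin m → Fin k =>
      ∀ j, (Finset.univ.filter fun i => g i = j).card = v j).card * (∏ j, t j ^ v j) *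
      L (fun i => x (f i)) := by
  have hle : ∀ (g : Fin m → Fin k) j, (Finset.univ.filter fun i => g i = j).card < m + 1 := by
    intro g j
    have := Finset.card_le_univ (Finset.univ.filter fun i => g i = j)
    simp only [Fintype.card_fin] at this
    omega
  have h1 : ∀ a : Fin k → Fin (m + 1), L (fun _ => ∑ j, (t j * w ^ (a j : ℕ)) • x j) =
      ∑ g : Fin m → Fin k, (∏ j, (t j * w ^ (a j : ℕ)) ^
        (Finset.univ.filter fun i => g i = j).card) * L (fun i => x (g i)) := by
    intro a
    rw [L.map_sum (fun (_ : Fin m) j => (t j * w ^ (a j : ℕ)) • x j)]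
    refine Finset.sum_congr rfl fun g _ => ?_
    rw [L.map_smul_univ (fun i => t (g i) * w ^ (a (g i) : ℕ)) (fun i => x (g i)),
      prod_fib g (fun j => t j * w ^ (a j : ℕ)), smul_eq_mul]
  simp_rw [h1, Finset.mul_sum]
  rw [Finset.sum_comm]
  have h2 : ∀ g : Fin m → Fin k, (∑ a : Fin k → Fin (m + 1), (∏ j, ((w ^ (a j : ℕ)) ^ v j)⁻¹) *
      ((∏ j, (t j * w ^ (a j : ℕ)) ^ (Finset.univ.filter fun i => g i = j).card) *
        L (fun i => x (g i)))) =
      if ∀ j, (Finset.univ.filter fun i => g i = j).card = v j then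
        ((m + 1 : ℕ) : ℂ) ^ k * (∏ j, t j ^ v j) * L (fun i => x (f i)) else 0 := by
    intro g
    have h3 : (∑ a : Fin k → Fin (m + 1), (∏ j, ((w ^ (a j : ℕ)) ^ v j)⁻¹) *
      ((∏ j, (t j * w ^ (a j : ℕ)) ^ (Finset.univ.filter fun i => g i = j).card) *
        L (fun i => x (g i)))) =
        (∏ j, ∑ b : Fin (m + 1), t j ^ (Finset.univ.filter fun i => g i = j).card *
          (((w ^ (b : ℕ)) ^ v j)⁻¹ *
            (w ^ (b : ℕ)) ^ (Finset.univ.filter fun i => g i = j).card)) *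
          L (fun i => x (g i)) := by
      rw [Finset.prod_univ_sum, Finset.sum_mul, Fintype.piFinset_univ]
      refine Finset.sum_congr rfl fun a _ => ?_
      rw [← mul_assoc, ← Finset.prod_mul_distrib]
      congr 1
      refine Finset.prod_congr rfl fun j _ => ?_
      rw [mul_pow]; ring
    rw [h3]
    have h4 : ∀ j, (∑ b : Fin (m + 1), t j ^ (Finset.univ.filter fun i => g i = j).card *
          (((w ^ (b : ℕ)) ^ v j)⁻¹ *
            (w ^ (b : ℕ)) ^ (Finset.univ.filter fun i => g i = j).card)) =
        t j ^ (Finset.univ.filter fun i => g i = j).card *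
        if (Finset.univ.filter fun i => g i = j).card = v j then ((m + 1 : ℕ) : ℂ) else 0 := by
      intro j
      rw [← Finset.mul_sum, root_sum hw (Nat.succ_pos m) (hle g j) (by rw [← hf j]; exact hle f j)]
    rw [Finset.prod_congr rfl (fun j _ => h4 j)]
    split_ifs with h
    · obtain ⟨τ, hτ⟩ := exists_perm_of_fibers f g (fun j => by rw [h, hf])
      have h5 : L (fun i => x (g i)) = L (fun i => x (f i)) := by
        rw [← hsym τ (fun i => x (f i))]
        simp_rw [hτ]
      rw [h5]
      simp only [h, if_true, Finset.prod_mul_distrib, Finset.prod_const, Finset.card_univ,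
        Fintype.card_fin]
      ring
    · push Not at h
      obtain ⟨j, hj⟩ := h
      rw [Finset.prod_eq_zero (Finset.mem_univ j) (by rw [if_neg hj, mul_zero]), zero_mul]
  rw [Finset.sum_congr rfl (fun g _ => h2 g), ← Finset.sum_filter, Finset.sum_const, nsmul_eq_mul]
  ring

/-- Harris.  Let `X` be a complex normed space, `P` a continuous
`m`-homogeneous polynomial on `X` with polar `L` (a continuous symmetric `m`-linear form
with `L(x,…,x) = P(x)`).  For nonnegative integers `m_1,…,m_k` with `m_1 + ⋯ + m_k = m` and
unit vectors `x^{(1)},…,x^{(k)}`,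
`|L(x^{(1)},…,x^{(1)},…,x^{(k)},…,x^{(k)})| ≤ (m_1!⋯m_k! m^m)/(m_1^{m_1}⋯m_k^{m_k} m!) ‖P‖`,
where `x^{(j)}` is repeated `m_j` times; the repeated tuple is encoded by any
`f : Fin m → Fin k` whose fiber over `j` has cardinality `m_j`. -/
theorem harris_polarization {X : Type*} [NormedAddCommGroup X] [NormedSpace ℂ X]
    (m : ℕ) (hm : 0 < m)
    (L : ContinuousMultilinearMap ℂ (fun _ : Fin m => X) ℂ)
    (hsym : ∀ (σ : Equiv.Perm (Fin m)) (x : Fin m → X), L (fun i => x (σ i)) = L x)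
    (k : ℕ) (v : Fin k → ℕ) (hv : ∑ j, v j = m)
    (x : Fin k → X) (hx : ∀ j, ‖x j‖ = 1)
    (f : Fin m → Fin k) (hf : ∀ j, (Finset.univ.filter fun i => f i = j).card = v j) :
    ‖L fun i => x (f i)‖ ≤
      (((∏ j, (v j)!) * m ^ m : ℕ) : ℝ) / (((∏ j, (v j) ^ (v j)) * m ! : ℕ) : ℝ) *
        sSup {y : ℝ | ∃ z : X, ‖z‖ ≤ 1 ∧ y = ‖L fun _ => z‖} := by
  set M := sSup {y : ℝ | ∃ z : X, ‖z‖ ≤ 1 ∧ y = ‖L fun _ => z‖} with hM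
  have hmR : (0 : ℝ) < m := by exact_mod_cast hm
  have hle : ∀ z : X, ‖z‖ ≤ 1 → ‖L fun _ => z‖ ≤ M := by
    intro z hz
    refine le_csSup ⟨‖L‖, ?_⟩ ⟨z, hz, rfl⟩
    rintro y ⟨z, hz, rfl⟩
    refine (L.le_opNorm _).trans ?_
    refine mul_le_of_le_one_right (norm_nonneg _) ?_
    exact Finset.prod_le_one (fun _ _ => norm_nonneg _) (fun _ _ => hz)
  obtain ⟨w, hw⟩ : ∃ w : ℂ, IsPrimitiveRoot w (m + 1) :=
    ⟨_, Complex.isPrimitiveRoot_exp (m + 1) (Nat.succ_ne_zero m)⟩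
  have hw1 : ‖w‖ = 1 := hw.norm'_eq_one (Nat.succ_ne_zero m)
  have hav := averaging m L hsym k v x (fun j => (v j : ℂ) / m) f hf w hw
  have hcard := card_fibers v f hf
  set c := (Finset.univ.filter fun g : Fin m → Fin k =>
      ∀ j, (Finset.univ.filter fun i => g i = j).card = v j).card with hc
  have hbound : ‖∑ a : Fin k → Fin (m + 1), (∏ j, ((w ^ (a j : ℕ)) ^ v j)⁻¹) *
      L (fun _ => ∑ j, ((v j : ℂ) / m * w ^ (a j : ℕ)) • x j)‖ ≤ ((m + 1 : ℕ) : ℝ) ^ k * M := by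
    refine (norm_sum_le _ _).trans ?_
    refine (Finset.sum_le_card_nsmul _ _ M ?_).trans ?_
    · intro a _
      rw [norm_mul, norm_prod]
      simp only [norm_inv, norm_pow, hw1, one_pow, inv_one, Finset.prod_const_one, one_mul]
      apply hle
      refine (norm_sum_le _ _).trans ?_
      simp only [norm_smul, norm_mul, norm_div, norm_pow, hw1, hx, one_pow, mul_one,
        Complex.norm_natCast]
      rw [← Finset.sum_div, ← Nat.cast_sum, hv, div_self hmR.ne']
    · simp
  rw [hav] at hbound
  simp only [norm_mul, norm_pow, norm_prod, norm_div, Complex.norm_natCast] at hbound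
  rw [mul_assoc, mul_assoc] at hbound
  have hb2 := le_of_mul_le_mul_left hbound (by positivity)
  have hvv : ∀ j, (0 : ℝ) < (v j : ℝ) ^ v j := by
    intro j
    rcases Nat.eq_zero_or_pos (v j) with h | h
    · simp [h]
    · positivity
  have hA : (0 : ℝ) < ∏ j, (v j : ℝ) ^ v j := Finset.prod_pos fun j _ => hvv j
  have hB : (0 : ℝ) < ∏ j, ((v j)! : ℝ) := Finset.prod_pos fun j _ => by positivity
  have hprod : ∏ j, ((v j : ℝ) / m) ^ v j = (∏ j, (v j : ℝ) ^ v j) / (m : ℝ) ^ m := by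
    simp_rw [div_pow]
    rw [Finset.prod_div_distrib, Finset.prod_pow_eq_pow_sum, hv]
  rw [hprod] at hb2
  have hcR : (c : ℝ) * ∏ j, ((v j)! : ℝ) = (m ! : ℝ) := by
    rw [← hcard]; push_cast; rfl
  push_cast
  rw [← hcR, div_mul_eq_mul_div, le_div_iff₀ (by rw [hcR]; positivity)]
  have hmm : (0 : ℝ) < (m : ℝ) ^ m := by positivity
  have h6 := mul_le_mul_of_nonneg_left hb2 (mul_pos hB hmm).le
  refine le_trans (le_of_eq ?_) h6
  field_simp
end
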